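/- arXiv:2511.03557 — 3 statements merged into one kernel-verified Lean document; each statement's English description precedes it below -/
import Mathlib

section
/- For polytopes P and Q both containing the origin as a vertex, the simplex-counting polynomial of the subdirect sum satisfies S_{P∨Q}(x) = (1/x)·S⁰_P(x)·S⁰_Q(x) + S¹_P(x)·S¹_Q(x). -/
open Set

variable {E : Type*} [AddCommGroup E] [Module ℝ E]

/-- A polytope: the convex hull of a finite set of points. -/
def IsPolytope (P : Set E) : Prop := ∃ S : Finset E, P = convexHull ℝ (S : Set E)

open Classical in
/-- Dimension of a polytope: `-1` for the empty set, else the dimension of its affine span. -/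
noncomputable def polyDim (P : Set E) : ℤ :=
  if P = ∅ then -1 else (Module.finrank ℝ (vectorSpan ℝ P) : ℤ)

/-- Number of vertices (extreme points). -/
noncomputable def vertexCount (P : Set E) : ℕ := (P.extremePoints ℝ).ncard

/-- A simplex: a polytope with `dim + 1` vertices (the empty set counts as a simplex). -/
def IsSimplex (P : Set E) : Prop :=
  IsPolytope P ∧ (vertexCount P : ℤ) = polyDim P + 1

/-- Faces of a polytope are its extreme subsets. -/
def IsFaceOf (F P : Set E) : Prop := IsExtreme ℝ P F

/-- Number of `k`-dimensional simplex faces of `P`. -/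
noncomputable def simpCount (P : Set E) (k : ℤ) : ℕ :=
  {F : Set E | IsFaceOf F P ∧ IsSimplex F ∧ polyDim F = k}.ncard

/-- Number of `k`-dimensional simplex faces of `P` containing the origin. -/
noncomputable def simpCount0 (P : Set E) (k : ℤ) : ℕ :=
  {F : Set E | IsFaceOf F P ∧ IsSimplex F ∧ polyDim F = k ∧ (0 : E) ∈ F}.ncard

/-- Number of `k`-dimensional simplex faces of `P` not containing the origin. -/
noncomputable def simpCount1 (P : Set E) (k : ℤ) : ℕ :=
  {F : Set E | IsFaceOf F P ∧ IsSimplex F ∧ polyDim F = k ∧ (0 : E) ∉ F}.ncard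

/-- Subdirect sum of two polytopes (each containing the origin as a vertex). -/
def subdirectSum {E F : Type*} [AddCommGroup E] [Module ℝ E] [AddCommGroup F] [Module ℝ F]
    (P : Set E) (Q : Set F) : Set (E × F) :=
  convexHull ℝ ((fun p => (p, (0 : F))) '' P ∪ (fun q => ((0 : E), q)) '' Q)

section Helpers

/-- Homogenization of a set. -/
def sc (F : Set E) (a : ℝ) (x : E) : Prop :=
  (a = 0 ∧ x = 0) ∨ (0 < a ∧ ∃ f ∈ F, x = a • f)

theorem sc.nonneg {F : Set E} {a : ℝ} {x : E} (h : sc F a x) : 0 ≤ a := by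
  rcases h with ⟨h, -⟩ | ⟨h, -⟩
  · exact h.ge
  · exact h.le

theorem sc_zero (F : Set E) : sc F 0 (0 : E) := Or.inl ⟨rfl, rfl⟩

theorem sc_of_mem {F : Set E} {a : ℝ} {x : E} (ha : 0 ≤ a) (hx : x ∈ F) : sc F a (a • x) := by
  rcases ha.eq_or_lt with rfl | h
  · simp [sc]
  · exact Or.inr ⟨h, x, hx, rfl⟩

theorem sc_one {F : Set E} {x : E} : sc F 1 x ↔ x ∈ F := by
  simp [sc]

theorem sc.mono {F P : Set E} (hFP : F ⊆ P) {a : ℝ} {x : E} (h : sc F a x) : sc P a x := by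
  rcases h with h | ⟨h, f, hf, rfl⟩
  · exact Or.inl h
  · exact Or.inr ⟨h, f, hFP hf, rfl⟩

theorem sc.smul {F : Set E} {a c : ℝ} {x : E} (hc : 0 ≤ c) (h : sc F a x) :
    sc F (c * a) (c • x) := by
  rcases h with ⟨rfl, rfl⟩ | ⟨h, f, hf, rfl⟩
  · simp [sc]
  · rw [smul_smul]
    exact sc_of_mem (by positivity) hf

theorem sc.of_smul {F : Set E} {a c : ℝ} {x : E} (hc : 0 < c) (h : sc F (c * a) (c • x)) :
    sc F a x := by
  have := h.smul (inv_nonneg.2 hc.le)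
  rwa [smul_smul, inv_mul_cancel₀ hc.ne', one_smul, ← mul_assoc, inv_mul_cancel₀ hc.ne',
    one_mul] at this

theorem sc.add {F : Set E} (hF : Convex ℝ F) {a b : ℝ} {x y : E} (hx : sc F a x)
    (hy : sc F b y) : sc F (a + b) (x + y) := by
  rcases hx with ⟨rfl, rfl⟩ | ⟨ha, f, hf, rfl⟩
  · simpa using hy
  rcases hy with ⟨rfl, rfl⟩ | ⟨hb, g, hg, rfl⟩
  · simpa using sc_of_mem ha.le hf
  refine Or.inr ⟨by positivity, (a / (a + b)) • f + (b / (a + b)) • g,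
    hF hf hg (by positivity) (by positivity) (by field_simp), ?_⟩
  rw [smul_add, smul_smul, smul_smul]
  congr 2 <;> field_simp

theorem sc.face {P F : Set E} (h : IsExtreme ℝ P F) {a b : ℝ} {x y : E} (hx : sc P a x)
    (hy : sc P b y) (hxy : sc F (a + b) (x + y)) : sc F a x := by
  rcases hx with ⟨rfl, rfl⟩ | ⟨ha, p, hp, rfl⟩
  · exact sc_zero F
  rcases hy with ⟨rfl, rfl⟩ | ⟨hb, q, hq, rfl⟩
  · simpa using hxy
  rcases hxy with ⟨h0, -⟩ | ⟨h0, f, hf, hff⟩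
  · linarith
  refine sc_of_mem ha.le (h.left_mem_of_mem_openSegment hp hq hf
    ⟨a / (a + b), b / (a + b), by positivity, by positivity, by field_simp, ?_⟩)
  have : f = (a + b)⁻¹ • ((a + b) • f) := by
    rw [smul_smul, inv_mul_cancel₀ h0.ne', one_smul]
  rw [this, ← hff, smul_add, smul_smul, smul_smul]
  congr 2 <;> field_simp

theorem sc.raise {F : Set E} (hF : Convex ℝ F) (h0 : (0 : E) ∈ F) {a b : ℝ} {x : E}
    (hab : a ≤ b) (h : sc F a x) : sc F b x := by
  have := h.add hF (sc_of_mem (sub_nonneg.2 hab) h0)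
  simpa using this

theorem sc.le {P F : Set E} (h : IsExtreme ℝ P F) (h0P : (0 : E) ∈ P) (h0F : (0 : E) ∉ F)
    {a A : ℝ} {x : E} (hF : sc F a x) (hP : sc P A x) : a ≤ A := by
  by_contra! hlt
  have h1 : sc P (a - A) ((a - A) • (0 : E)) := sc_of_mem (by linarith) h0P
  have h2 : sc F (a - A) ((a - A) • (0 : E)) := h1.face h hP (by simpa using hF)
  rcases h2 with ⟨h, -⟩ | ⟨h, f, hf, hff⟩
  · linarith
  · have : f = 0 := by
      rw [smul_zero] at hff
      exact (smul_eq_zero.1 hff.symm).resolve_left h.ne'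
    exact h0F (this ▸ hf)

/-! ### polytopes -/

theorem face_eq_hull {S F : Set E} (h : IsExtreme ℝ (convexHull ℝ S) F) (hF : Convex ℝ F) :
    F = convexHull ℝ (S ∩ F) := by
  apply Subset.antisymm
  · have : convexHull ℝ S ⊆ {x | x ∈ convexHull ℝ S ∧ (x ∈ F → x ∈ convexHull ℝ (S ∩ F))} := by
      apply convexHull_min
      · intro s hs
        exact ⟨subset_convexHull ℝ _ hs, fun hf => subset_convexHull ℝ _ ⟨hs, hf⟩⟩
      · rw [convex_iff_openSegment_subset]
        rintro x ⟨hx, hx'⟩ y ⟨hy, hy'⟩ z hz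
        refine ⟨(convex_convexHull ℝ S).openSegment_subset hx hy hz, fun hzF => ?_⟩
        exact (convex_convexHull ℝ _).openSegment_subset
          (hx' (h.left_mem_of_mem_openSegment hx hy hzF hz))
          (hy' (h.right_mem_of_mem_openSegment hx hy hzF hz)) hz
    exact fun x hx => (this (h.subset hx)).2 hx
  · exact convexHull_min inter_subset_right hF

theorem face_polytope {P F : Set E} (hP : IsPolytope P) (h : IsExtreme ℝ P F)
    (hF : Convex ℝ F) : IsPolytope F := by
  classical
  obtain ⟨S, rfl⟩ := hP
  refine ⟨S.filter (· ∈ F), ?_⟩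
  rw [Finset.coe_filter]
  exact face_eq_hull h hF

theorem IsPolytope.convex {P : Set E} (hP : IsPolytope P) : Convex ℝ P := by
  obtain ⟨S, rfl⟩ := hP
  exact convex_convexHull ℝ _

theorem faces_finite {P : Set E} (hP : IsPolytope P) :
    {F : Set E | IsExtreme ℝ P F ∧ Convex ℝ F}.Finite := by
  obtain ⟨S, rfl⟩ := hP
  refine ((S.finite_toSet.finite_subsets).image (fun T => convexHull ℝ T)).subset ?_
  rintro F ⟨h, hF⟩
  exact ⟨(S : Set E) ∩ F, inter_subset_left, (face_eq_hull h hF).symm⟩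

theorem ext_of_notMem {T : Set E} {s : E} (hs : s ∉ convexHull ℝ T) :
    s ∈ (convexHull ℝ (insert s T)).extremePoints ℝ := by
  set C : Set E := (fun x => x - s) '' convexHull ℝ T with hC
  have hCc : Convex ℝ C := by
    rw [hC]
    simpa [sub_eq_add_neg, add_comm] using (convex_convexHull ℝ T).translate (-s)
  have h0 : (0 : E) ∉ C := by
    rintro ⟨x, hx, hxs⟩
    exact hs (sub_eq_zero.1 hxs ▸ hx)
  have key : convexHull ℝ (insert s T) ⊆ {x | ∃ m, sc C m (x - s)} := by
    apply convexHull_min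
    · rintro x (rfl | hx)
      · exact ⟨0, by simp [sc]⟩
      · exact ⟨1, sc_one.2 ⟨x, subset_convexHull ℝ _ hx, rfl⟩⟩
    · rintro x ⟨m, hm⟩ y ⟨n, hn⟩ a b ha hb hab
      refine ⟨a * m + b * n, ?_⟩
      have := (hm.smul ha).add hCc (hn.smul hb)
      convert this using 1
      rw [smul_sub, smul_sub]
      have : s = a • s + b • s := by rw [← add_smul, hab, one_smul]
      nth_rewrite 1 [this]
      abel
  refine ⟨subset_convexHull ℝ _ (mem_insert _ _), ?_⟩
  rintro x hx y hy ⟨a, b, ha, hb, hab, hz⟩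
  obtain ⟨m, hm⟩ := key hx
  obtain ⟨n, hn⟩ := key hy
  have hsum := (hm.smul ha.le).add hCc (hn.smul hb.le)
  have hzero : a • (x - s) + b • (y - s) = 0 := by
    have : s = a • s + b • s := by rw [← add_smul, hab, one_smul]
    rw [smul_sub, smul_sub, ← sub_eq_zero.2 (hz.trans this)]
    abel
  rw [hzero] at hsum
  rcases hsum with ⟨h, -⟩ | ⟨h, f, hf, hff⟩
  · have hm0 := hm.nonneg
    have hn0 := hn.nonneg
    have : m = 0 := by
      have h1 : 0 ≤ a * m := by positivity
      have h2 : 0 ≤ b * n := by positivity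
      have h3 : a * m = 0 := by linarith
      exact (mul_eq_zero.1 h3).resolve_left ha.ne'
    rcases hm with ⟨-, hm⟩ | ⟨hm, -⟩
    · exact sub_eq_zero.1 hm
    · linarith
  · exact absurd (((smul_eq_zero.1 hff.symm).resolve_left h.ne') ▸ hf) h0

theorem polytope_hull_ext {P : Set E} (hP : IsPolytope P) :
    P = convexHull ℝ (P.extremePoints ℝ) := by
  classical
  obtain ⟨S₀, rfl⟩ := hP
  induction S₀ using Finset.strongInduction with
  | H S ih =>
    by_cases h : ∃ s ∈ S, s ∈ convexHull ℝ ((S.erase s : Finset E) : Set E)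
    · obtain ⟨s, hs, hsm⟩ := h
      have : convexHull ℝ (S : Set E) = convexHull ℝ ((S.erase s : Finset E) : Set E) := by
        apply Subset.antisymm
        · apply convexHull_min _ (convex_convexHull ℝ _)
          intro x hx
          by_cases hxs : x = s
          · exact hxs ▸ hsm
          · exact subset_convexHull ℝ _ (by simpa [hxs] using hx)
        · exact convexHull_mono (by simp)
      rw [this]
      exact ih _ (Finset.erase_ssubset hs)
    · push Not at h
      apply Subset.antisymm
      · apply convexHull_min _ (convex_convexHull ℝ _)
        intro s hs
        apply subset_convexHull
        have := ext_of_notMem (h s hs)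
        rwa [← Finset.coe_insert, Finset.insert_erase hs] at this
      · exact convexHull_min extremePoints_subset (convex_convexHull ℝ _)

theorem polytope_ext_finite {P : Set E} (hP : IsPolytope P) : (P.extremePoints ℝ).Finite := by
  obtain ⟨S, rfl⟩ := hP
  exact S.finite_toSet.subset extremePoints_convexHull_subset

theorem polyDim_add_one_le {P : Set E} (hP : IsPolytope P) :
    polyDim P + 1 ≤ vertexCount P := by
  classical
  unfold polyDim vertexCount
  split_ifs with h
  · simp
  · have hfin := polytope_ext_finite hP
    have hull := polytope_hull_ext hP
    have hne : (P.extremePoints ℝ).Nonempty := by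
      rw [nonempty_iff_ne_empty]
      intro h0
      rw [h0, convexHull_empty] at hull
      exact h hull
    have hv : vectorSpan ℝ P = vectorSpan ℝ (P.extremePoints ℝ) := by
      conv_lhs => rw [hull]
      rw [← direction_affineSpan, affineSpan_convexHull, direction_affineSpan]
    have hpos : 0 < (P.extremePoints ℝ).ncard := (ncard_pos hfin).2 hne
    have := finrank_vectorSpan_image_finset_le ℝ (id : E → E) hfin.toFinset
      (n := (P.extremePoints ℝ).ncard - 1)
      (by rw [← ncard_eq_toFinset_card _ hfin]; omega)
    rw [Finset.image_id, hfin.coe_toFinset, ← hv] at this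
    omega

theorem span_finite {P : Set E} (hP : IsPolytope P) :
    FiniteDimensional ℝ (Submodule.span ℝ P) := by
  obtain ⟨S, rfl⟩ := hP
  have h : Submodule.span ℝ (convexHull ℝ (S : Set E)) ≤ Submodule.span ℝ (S : Set E) :=
    Submodule.span_le.2 (convexHull_min Submodule.subset_span (Submodule.span ℝ (S : Set E)).convex)
  have : FiniteDimensional ℝ (Submodule.span ℝ (S : Set E)) :=
    FiniteDimensional.span_finset ℝ S
  exact Submodule.finiteDimensional_of_le h

theorem mem_vectorSpan_sc {F : Set E} (hF : Convex ℝ F) {v : E} (hv : v ∈ vectorSpan ℝ F) :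
    ∃ c u w, sc F c u ∧ sc F c w ∧ v = u - w := by
  rw [vectorSpan_def] at hv
  induction hv using Submodule.span_induction with
  | mem x hx =>
    obtain ⟨p, hp, q, hq, rfl⟩ := hx
    exact ⟨1, p, q, sc_one.2 hp, sc_one.2 hq, rfl⟩
  | zero => exact ⟨0, 0, 0, sc_zero F, sc_zero F, by simp⟩
  | add x y _ _ hx hy =>
    obtain ⟨c, u, w, h1, h2, rfl⟩ := hx
    obtain ⟨c', u', w', h1', h2', rfl⟩ := hy
    exact ⟨_, _, _, h1.add hF h1', h2.add hF h2', by abel⟩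
  | smul a x _ hx =>
    obtain ⟨c, u, w, h1, h2, rfl⟩ := hx
    rcases le_total 0 a with ha | ha
    · exact ⟨_, _, _, h1.smul ha, h2.smul ha, smul_sub _ _ _⟩
    · exact ⟨_, _, _, h2.smul (neg_nonneg.2 ha), h1.smul (neg_nonneg.2 ha), by
        simp only [neg_smul, smul_sub]; abel⟩

theorem vectorSpan_le_span (F : Set E) : vectorSpan ℝ F ≤ Submodule.span ℝ F := by
  rw [vectorSpan_def, Submodule.span_le]
  rintro _ ⟨p, hp, q, hq, rfl⟩
  exact Submodule.sub_mem _ (Submodule.subset_span hp) (Submodule.subset_span hq)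

theorem polyDim_of_mem {F : Set E} (h0 : (0 : E) ∈ F) :
    polyDim F = Module.finrank ℝ (Submodule.span ℝ F) := by
  unfold polyDim
  rw [if_neg (by rintro rfl; exact h0)]
  have : vectorSpan ℝ F = Submodule.span ℝ F := by
    apply le_antisymm (vectorSpan_le_span F)
    rw [Submodule.span_le]
    intro x hx
    simpa using vsub_mem_vectorSpan ℝ hx h0
  rw [this]

theorem polyDim_of_notMem {P F : Set E} (hP : IsPolytope P) (h : IsExtreme ℝ P F)
    (hF : Convex ℝ F) (h0P : (0 : E) ∈ P) (h0 : (0 : E) ∉ F) :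
    polyDim F + 1 = Module.finrank ℝ (Submodule.span ℝ F) := by
  have := span_finite (face_polytope hP h hF)
  unfold polyDim
  split_ifs with hE
  · subst hE; rw [Submodule.span_empty, finrank_bot]; simp
  obtain ⟨f, hf⟩ := nonempty_iff_ne_empty.2 hE
  have hfv : f ∉ vectorSpan ℝ F := by
    intro hv
    obtain ⟨c, u, w, h1, h2, rfl⟩ := mem_vectorSpan_sc hF hv
    have h3 := (sc_one.2 hf).add hF h2
    rw [sub_add_cancel] at h3
    have := h3.le h h0P h0 (h1.mono h.subset)
    linarith
  have hsp : Submodule.span ℝ F = vectorSpan ℝ F ⊔ Submodule.span ℝ {f} := by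
    apply le_antisymm
    · rw [Submodule.span_le]
      intro x hx
      have : x = (x - f) + f := by abel
      rw [this]
      exact Submodule.add_mem_sup (vsub_mem_vectorSpan ℝ hx hf)
        (Submodule.mem_span_singleton_self f)
    · refine sup_le (vectorSpan_le_span F) (Submodule.span_mono (by simpa using hf))
  have : FiniteDimensional ℝ (vectorSpan ℝ F) :=
    Submodule.finiteDimensional_of_le (vectorSpan_le_span F)
  have hdisj : vectorSpan ℝ F ⊓ Submodule.span ℝ {f} = ⊥ := by
    rw [← disjoint_iff]
    exact (Submodule.disjoint_span_singleton_of_notMem hfv)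
  have hf0 : f ≠ 0 := by
    rintro rfl
    exact h0 hf
  have hrk := Submodule.finrank_sup_add_finrank_inf_eq (vectorSpan ℝ F) (Submodule.span ℝ {f})
  rw [hdisj, finrank_bot, finrank_span_singleton hf0, ← hsp] at hrk
  omega

theorem simplex_face_iff {P F : Set E} (hP : IsPolytope P) :
    (IsFaceOf F P ∧ IsSimplex F) ↔
      ((IsExtreme ℝ P F ∧ Convex ℝ F) ∧ (vertexCount F : ℤ) = polyDim F + 1) :=
  ⟨fun h => ⟨⟨h.1, h.2.1.convex⟩, h.2.2⟩,
    fun h => ⟨h.1.1, face_polytope hP h.1.1 h.1.2, h.2⟩⟩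


/-! ### the subdirect sum -/

variable {W : Type*} [AddCommGroup W] [Module ℝ W]

theorem mem_J {A : Set E} {B : Set W} (hA : Convex ℝ A) (hB : Convex ℝ B) {z : E × W} :
    z ∈ subdirectSum A B ↔ ∃ a b : ℝ, a + b = 1 ∧ sc A a z.1 ∧ sc B b z.2 := by
  constructor
  · have : subdirectSum A B ⊆ {z | ∃ a b : ℝ, a + b = 1 ∧ sc A a z.1 ∧ sc B b z.2} := by
      apply convexHull_min
      · rintro _ (⟨p, hp, rfl⟩ | ⟨q, hq, rfl⟩)
        · exact ⟨1, 0, by simp, sc_one.2 hp, sc_zero B⟩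
        · exact ⟨0, 1, by simp, sc_zero A, sc_one.2 hq⟩
      · rintro x ⟨a, b, hab, h1, h2⟩ y ⟨c, d, hcd, h3, h4⟩ s t hs ht hst
        refine ⟨s * a + t * c, s * b + t * d, ?_, (h1.smul hs).add hA (h3.smul ht),
          (h2.smul hs).add hB (h4.smul ht)⟩
        linear_combination s * hab + t * hcd + hst
    exact fun h => this h
  · obtain ⟨x, y⟩ := z
    rintro ⟨a, b, hab, h1, h2⟩
    have hl : ∀ p ∈ A, (p, (0 : W)) ∈ subdirectSum A B := fun p hp =>
      subset_convexHull ℝ _ (Or.inl ⟨p, hp, rfl⟩)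
    have hr : ∀ q ∈ B, ((0 : E), q) ∈ subdirectSum A B := fun q hq =>
      subset_convexHull ℝ _ (Or.inr ⟨q, hq, rfl⟩)
    rcases h1 with ⟨rfl, h1⟩ | ⟨ha, p, hp, h1⟩
    · obtain rfl : b = 1 := by linarith
      simp only at h1 h2
      subst h1
      exact hr _ (sc_one.1 h2)
    rcases h2 with ⟨rfl, h2⟩ | ⟨hb, q, hq, h2⟩
    · obtain rfl : a = 1 := by linarith
      simp only [one_smul] at h1 h2
      subst h1 h2
      exact hl _ hp
    simp only at h1 h2
    subst h1 h2
    have : a • (p, (0 : W)) + b • ((0 : E), q) ∈ subdirectSum A B :=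
      (convex_convexHull ℝ _ : Convex ℝ (subdirectSum A B)) (hl p hp) (hr q hq) ha.le hb.le
      hab
    simpa using this

theorem J_convex (A : Set E) (B : Set W) : Convex ℝ (subdirectSum A B) := convex_convexHull ℝ _

theorem inl_mem_J {A : Set E} (B : Set W) {p : E} (hp : p ∈ A) :
    (p, (0 : W)) ∈ subdirectSum A B :=
  subset_convexHull ℝ _ (Or.inl ⟨p, hp, rfl⟩)

theorem inr_mem_J (A : Set E) {B : Set W} {q : W} (hq : q ∈ B) :
    ((0 : E), q) ∈ subdirectSum A B :=
  subset_convexHull ℝ _ (Or.inr ⟨q, hq, rfl⟩)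

theorem inl_mem_J_iff {A : Set E} {B : Set W} (hA : Convex ℝ A) (hB : Convex ℝ B)
    (h : (0 : E) ∈ A ↔ (0 : W) ∈ B) {p : E} : (p, (0 : W)) ∈ subdirectSum A B ↔ p ∈ A := by
  refine ⟨fun hp => ?_, inl_mem_J B⟩
  obtain ⟨a, b, hab, h1, h2⟩ := (mem_J hA hB).1 hp
  have hb := h2.nonneg
  rcases h2 with ⟨rfl, -⟩ | ⟨hb, q, hq, h2⟩
  · obtain rfl : a = 1 := by linarith
    exact sc_one.1 h1
  · have : q = 0 := (smul_eq_zero.1 h2.symm).resolve_left hb.ne'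
    exact sc_one.1 (h1.raise hA (h.2 (this ▸ hq)) (by linarith))

theorem inr_mem_J_iff {A : Set E} {B : Set W} (hA : Convex ℝ A) (hB : Convex ℝ B)
    (h : (0 : E) ∈ A ↔ (0 : W) ∈ B) {q : W} : ((0 : E), q) ∈ subdirectSum A B ↔ q ∈ B := by
  refine ⟨fun hp => ?_, inr_mem_J A⟩
  obtain ⟨a, b, hab, h1, h2⟩ := (mem_J hA hB).1 hp
  have ha := h1.nonneg
  rcases h1 with ⟨rfl, -⟩ | ⟨ha, q, hq, h1⟩
  · obtain rfl : b = 1 := by linarith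
    exact sc_one.1 h2
  · have : q = 0 := (smul_eq_zero.1 h1.symm).resolve_left ha.ne'
    exact sc_one.1 (h2.raise hB (h.1 (this ▸ hq)) (by linarith))

theorem J_mono {A P : Set E} {B Q : Set W} (hA : A ⊆ P) (hB : B ⊆ Q) :
    subdirectSum A B ⊆ subdirectSum P Q :=
  convexHull_mono (union_subset_union (image_mono hA) (image_mono hB))

theorem J_face {P A : Set E} {Q B : Set W} (hP : Convex ℝ P) (hQ : Convex ℝ Q)
    (h0P : (0 : E) ∈ P) (h0Q : (0 : W) ∈ Q)
    (hAP : IsExtreme ℝ P A) (hBQ : IsExtreme ℝ Q B)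
    (hA : Convex ℝ A) (hB : Convex ℝ B) (h : (0 : E) ∈ A ↔ (0 : W) ∈ B) :
    IsExtreme ℝ (subdirectSum P Q) (subdirectSum A B) := by
  refine ⟨J_mono hAP.subset hBQ.subset, ?_⟩
  rintro ⟨x1, y1⟩ h1 ⟨x2, y2⟩ h2 ⟨x, y⟩ hz ⟨s, t, hs, ht, hst, hz'⟩
  simp only [Prod.smul_mk, Prod.mk_add_mk, Prod.mk.injEq] at hz'
  obtain ⟨rfl, rfl⟩ := hz'
  obtain ⟨a1, b1, hab1, hx1, hy1⟩ := (mem_J hP hQ).1 h1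
  obtain ⟨a2, b2, hab2, hx2, hy2⟩ := (mem_J hP hQ).1 h2
  obtain ⟨a, b, hab, hx, hy⟩ := (mem_J hA hB).1 hz
  simp only at hx1 hy1 hx2 hy2 hx hy
  have ha1 := hx1.nonneg
  have ha2 := hx2.nonneg
  have hb1 := hy1.nonneg
  have hb2 := hy2.nonneg
  have ha := hx.nonneg
  have hb := hy.nonneg
  refine (mem_J hA hB).2 ⟨a1, b1, hab1, ?_, ?_⟩
  all_goals simp only
  · by_cases h0 : (0 : E) ∈ A
    · have k1 : s * a1 ≤ s := by nlinarith
      have k2 : t * a2 ≤ t := by nlinarith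
      have e1 := hx.raise hA h0 (b := 1) (by linarith)
      have e2 := (hx2.smul ht.le).raise hP h0P (b := 1 - s * a1) (by linarith)
      refine ((hx1.smul hs.le).face hAP e2 ?_).of_smul hs
      rwa [add_sub_cancel]
    · have l1 := hx.le hAP h0P h0 ((hx1.smul hs.le).add hP (hx2.smul ht.le))
      have l2 := hy.le hBQ h0Q (fun h' => h0 (h.2 h')) ((hy1.smul hs.le).add hQ (hy2.smul ht.le))
      have : a = s * a1 + t * a2 := by
        have : s * a1 + t * a2 + (s * b1 + t * b2) = 1 := by
          linear_combination s * hab1 + t * hab2 + hst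
        linarith
      rw [this] at hx
      exact ((hx1.smul hs.le).face hAP (hx2.smul ht.le) hx).of_smul hs
  · by_cases h0 : (0 : E) ∈ A
    · have k1 : s * b1 ≤ s := by nlinarith
      have k2 : t * b2 ≤ t := by nlinarith
      have e1 := hy.raise hB (h.1 h0) (b := 1) (by linarith)
      have e2 := (hy2.smul ht.le).raise hQ h0Q (b := 1 - s * b1) (by linarith)
      refine ((hy1.smul hs.le).face hBQ e2 ?_).of_smul hs
      rwa [add_sub_cancel]
    · have l1 := hx.le hAP h0P h0 ((hx1.smul hs.le).add hP (hx2.smul ht.le))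
      have l2 := hy.le hBQ h0Q (fun h' => h0 (h.2 h')) ((hy1.smul hs.le).add hQ (hy2.smul ht.le))
      have : b = s * b1 + t * b2 := by
        have : s * a1 + t * a2 + (s * b1 + t * b2) = 1 := by
          linear_combination s * hab1 + t * hab2 + hst
        linarith
      rw [this] at hy
      exact ((hy1.smul hs.le).face hBQ (hy2.smul ht.le) hy).of_smul hs

theorem preL_face {P : Set E} {Q : Set W} {G : Set (E × W)} (hP : Convex ℝ P)
    (hQ : Convex ℝ Q) (h0 : (0 : E) ∈ P ↔ (0 : W) ∈ Q)
    (hG : IsExtreme ℝ (subdirectSum P Q) G) : IsExtreme ℝ P {p | (p, (0 : W)) ∈ G} := by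
  refine ⟨fun p hp => (inl_mem_J_iff hP hQ h0).1 (hG.subset hp), ?_⟩
  rintro x hx y hy z hz ⟨s, t, hs, ht, hst, rfl⟩
  exact hG.left_mem_of_mem_openSegment (inl_mem_J Q hx) (inl_mem_J Q hy) hz
    ⟨s, t, hs, ht, hst, by simp⟩

theorem preR_face {P : Set E} {Q : Set W} {G : Set (E × W)} (hP : Convex ℝ P)
    (hQ : Convex ℝ Q) (h0 : (0 : E) ∈ P ↔ (0 : W) ∈ Q)
    (hG : IsExtreme ℝ (subdirectSum P Q) G) : IsExtreme ℝ Q {q | ((0 : E), q) ∈ G} := by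
  refine ⟨fun p hp => (inr_mem_J_iff hP hQ h0).1 (hG.subset hp), ?_⟩
  rintro x hx y hy z hz ⟨s, t, hs, ht, hst, rfl⟩
  exact hG.left_mem_of_mem_openSegment (inr_mem_J P hx) (inr_mem_J P hy) hz
    ⟨s, t, hs, ht, hst, by simp⟩

theorem preL_convex {G : Set (E × W)} (hG : Convex ℝ G) : Convex ℝ {p | (p, (0 : W)) ∈ G} := by
  intro x hx y hy a b ha hb hab
  simpa using hG hx hy ha hb hab

theorem preR_convex {G : Set (E × W)} (hG : Convex ℝ G) : Convex ℝ {q | ((0 : E), q) ∈ G} := by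
  intro x hx y hy a b ha hb hab
  simpa using hG hx hy ha hb hab

theorem J_pre {P : Set E} {Q : Set W} {G : Set (E × W)} (hP : Convex ℝ P)
    (hQ : Convex ℝ Q) (hG : IsExtreme ℝ (subdirectSum P Q) G) (hGc : Convex ℝ G) :
    subdirectSum {p | (p, (0 : W)) ∈ G} {q | ((0 : E), q) ∈ G} = G := by
  apply Subset.antisymm
  · apply convexHull_min _ hGc
    rintro _ (⟨p, hp, rfl⟩ | ⟨q, hq, rfl⟩)
    · exact hp
    · exact hq
  · rintro ⟨x, y⟩ hz
    obtain ⟨a, b, hab, h1, h2⟩ := (mem_J hP hQ).1 (hG.subset hz)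
    simp only at h1 h2
    refine (mem_J (preL_convex hGc) (preR_convex hGc)).2 ⟨a, b, hab, ?_⟩
    simp only
    rcases h1 with ⟨rfl, rfl⟩ | ⟨ha, p, hp, rfl⟩
    · obtain rfl : b = 1 := by linarith
      exact ⟨sc_zero _, sc_one.2 hz⟩
    rcases h2 with ⟨rfl, rfl⟩ | ⟨hb, q, hq, rfl⟩
    · obtain rfl : a = 1 := by linarith
      exact ⟨sc_one.2 hz, sc_zero _⟩
    have hseg : (a • p, b • q) ∈ openSegment ℝ ((p, 0) : E × W) (0, q) :=
      ⟨a, b, ha, hb, hab, by simp⟩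
    exact ⟨sc_of_mem ha.le (hG.left_mem_of_mem_openSegment (inl_mem_J Q hp) (inr_mem_J P hq) hz hseg),
      sc_of_mem hb.le (hG.right_mem_of_mem_openSegment (inl_mem_J Q hp) (inr_mem_J P hq) hz hseg)⟩

theorem J_polytope {P : Set E} {Q : Set W} (hP : IsPolytope P) (hQ : IsPolytope Q) :
    IsPolytope (subdirectSum P Q) := by
  classical
  obtain ⟨S, rfl⟩ := hP
  obtain ⟨T, rfl⟩ := hQ
  refine ⟨S.image (fun p => (p, (0 : W))) ∪ T.image (fun q => ((0 : E), q)), ?_⟩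
  rw [Finset.coe_union, Finset.coe_image, Finset.coe_image]
  unfold subdirectSum
  have h1 : (fun p => (p, (0 : W))) '' convexHull ℝ (S : Set E)
      = convexHull ℝ ((fun p => (p, (0 : W))) '' (S : Set E)) :=
    (LinearMap.inl ℝ E W).image_convexHull _
  have h2 : (fun q => ((0 : E), q)) '' convexHull ℝ (T : Set W)
      = convexHull ℝ ((fun q => ((0 : E), q)) '' (T : Set W)) :=
    (LinearMap.inr ℝ E W).image_convexHull _
  rw [h1, h2, convexHull_convexHull_union_left, convexHull_convexHull_union_right]

theorem finrank_J {A : Set E} {B : Set W} (hA : IsPolytope A) (hB : IsPolytope B) :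
    Module.finrank ℝ (Submodule.span ℝ (subdirectSum A B)) =
      Module.finrank ℝ (Submodule.span ℝ A) + Module.finrank ℝ (Submodule.span ℝ B) := by
  have := span_finite hA
  have := span_finite hB
  have h : Submodule.span ℝ (subdirectSum A B)
      = (Submodule.span ℝ A).prod (Submodule.span ℝ B) := by
    have h1 := LinearMap.span_inl_union_inr (R := ℝ) (s := A) (t := B)
    rw [← h1]
    apply le_antisymm
    · rw [Submodule.span_le]
      exact convexHull_min Submodule.subset_span (Submodule.convex _)
    · exact Submodule.span_mono (subset_convexHull ℝ _)
  let e : ((Submodule.span ℝ A).prod (Submodule.span ℝ B)) ≃ₗ[ℝ]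
      (Submodule.span ℝ A) × (Submodule.span ℝ B) :=
    { toFun := fun z => (⟨z.1.1, z.2.1⟩, ⟨z.1.2, z.2.2⟩)
      invFun := fun z => ⟨(z.1.1, z.2.1), z.1.2, z.2.2⟩
      map_add' := fun _ _ => rfl
      map_smul' := fun _ _ => rfl
      left_inv := fun _ => rfl
      right_inv := fun _ => rfl }
  rw [h, e.finrank_eq, Module.finrank_prod]

theorem inl_ext {P : Set E} {Q : Set W} (hP : Convex ℝ P) (hQ : Convex ℝ Q)
    (h0P : (0 : E) ∈ P.extremePoints ℝ) (h0Q : (0 : W) ∈ Q.extremePoints ℝ) {p : E} :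
    (p, (0 : W)) ∈ (subdirectSum P Q).extremePoints ℝ ↔ p ∈ P.extremePoints ℝ := by
  constructor
  · intro h
    have := preL_face hP hQ (by simp [h0P.1, h0Q.1]) (isExtreme_singleton.2 h)
    rw [← isExtreme_singleton]
    convert this using 1
    ext; simp
  · intro h
    rw [← isExtreme_singleton] at h h0Q ⊢
    by_cases hp : p = 0
    · subst hp
      have := J_face hP hQ h0P.1 (h0Q.subset rfl) h h0Q (convex_singleton _) (convex_singleton _)
        (by simp)
      convert this using 1
      simp [subdirectSum]
    · have := J_face hP hQ h0P.1 (h0Q.subset rfl) h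
        (⟨empty_subset _, fun _ _ _ _ _ h => h.elim⟩ : IsExtreme ℝ Q ∅)
        (convex_singleton _) convex_empty (by simpa using Ne.symm hp)
      convert this using 1
      simp [subdirectSum]

theorem inr_ext {P : Set E} {Q : Set W} (hP : Convex ℝ P) (hQ : Convex ℝ Q)
    (h0P : (0 : E) ∈ P.extremePoints ℝ) (h0Q : (0 : W) ∈ Q.extremePoints ℝ) {q : W} :
    ((0 : E), q) ∈ (subdirectSum P Q).extremePoints ℝ ↔ q ∈ Q.extremePoints ℝ := by
  constructor
  · intro h
    have := preR_face hP hQ (by simp [h0P.1, h0Q.1]) (isExtreme_singleton.2 h)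
    rw [← isExtreme_singleton]
    convert this using 1
    ext; simp
  · intro h
    rw [← isExtreme_singleton] at h h0P ⊢
    by_cases hq : q = 0
    · subst hq
      have := J_face hP hQ (h0P.subset rfl) h0Q.1 h0P h (convex_singleton _) (convex_singleton _)
        (by simp)
      convert this using 1
      simp [subdirectSum]
    · have := J_face hP hQ (h0P.subset rfl) h0Q.1
        (⟨empty_subset _, fun _ _ _ _ _ h => h.elim⟩ : IsExtreme ℝ P ∅) h
        convex_empty (convex_singleton _) (by simpa using Ne.symm hq)
      convert this using 1
      simp [subdirectSum]

open Classical in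
theorem vertexCount_J {P A : Set E} {Q B : Set W} (hP : IsPolytope P) (hQ : IsPolytope Q)
    (h0P : (0 : E) ∈ P.extremePoints ℝ) (h0Q : (0 : W) ∈ Q.extremePoints ℝ)
    (hAP : IsExtreme ℝ P A) (hBQ : IsExtreme ℝ Q B)
    (hA : Convex ℝ A) (hB : Convex ℝ B) (h : (0 : E) ∈ A ↔ (0 : W) ∈ B) :
    vertexCount (subdirectSum A B) + (if (0 : E) ∈ A then 1 else 0)
      = vertexCount A + vertexCount B := by
  have hJ := J_face hP.convex hQ.convex h0P.1 h0Q.1 hAP hBQ hA hB h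
  have hV : (subdirectSum A B).extremePoints ℝ =
      (fun p => (p, (0 : W))) '' A.extremePoints ℝ ∪
        (fun q => ((0 : E), q)) '' B.extremePoints ℝ := by
    ext z
    constructor
    · intro hz
      have hz' := hJ.extremePoints_subset_extremePoints hz
      rcases extremePoints_convexHull_subset hz with ⟨p, hp, rfl⟩ | ⟨q, hq, rfl⟩
      · refine Or.inl ⟨p, ?_, rfl⟩
        rw [hAP.extremePoints_eq]
        exact ⟨hp, (inl_ext hP.convex hQ.convex h0P h0Q).1 hz'⟩
      · refine Or.inr ⟨q, ?_, rfl⟩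
        rw [hBQ.extremePoints_eq]
        exact ⟨hq, (inr_ext hP.convex hQ.convex h0P h0Q).1 hz'⟩
    · rw [hJ.extremePoints_eq, hAP.extremePoints_eq, hBQ.extremePoints_eq]
      rintro (⟨p, hp, rfl⟩ | ⟨q, hq, rfl⟩)
      · exact ⟨inl_mem_J B hp.1, (inl_ext hP.convex hQ.convex h0P h0Q).2 hp.2⟩
      · exact ⟨inr_mem_J A hq.1, (inr_ext hP.convex hQ.convex h0P h0Q).2 hq.2⟩
  have hAf := polytope_ext_finite (face_polytope hP hAP hA)
  have hBf := polytope_ext_finite (face_polytope hQ hBQ hB)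
  have hI : ((fun p => (p, (0 : W))) '' A.extremePoints ℝ ∩
        (fun q => ((0 : E), q)) '' B.extremePoints ℝ).ncard
        = if (0 : E) ∈ A then 1 else 0 := by
    split_ifs with h0
    · rw [ncard_eq_one]
      refine ⟨0, ?_⟩
      ext z
      constructor
      · rintro ⟨⟨p, hp, rfl⟩, ⟨q, hq, hpq⟩⟩
        simp only [Prod.mk.injEq] at hpq
        simp [← hpq.1]
      · rintro rfl
        rw [hAP.extremePoints_eq, hBQ.extremePoints_eq]
        exact ⟨⟨0, ⟨h0, h0P⟩, rfl⟩, ⟨0, ⟨h.1 h0, h0Q⟩, rfl⟩⟩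
    · rw [← ncard_empty (α := E × W)]
      congr 1
      rw [eq_empty_iff_forall_notMem]
      rintro z ⟨⟨p, hp, rfl⟩, ⟨q, hq, hpq⟩⟩
      simp only [Prod.mk.injEq] at hpq
      exact h0 (hpq.1 ▸ hp.1)
  unfold vertexCount
  rw [hV, ← hI, ncard_union_add_ncard_inter _ _ (hAf.image _) (hBf.image _),
    ncard_image_of_injective _ (fun _ _ h => (Prod.mk.inj h).1),
    ncard_image_of_injective _ (fun _ _ h => (Prod.mk.inj h).2)]

theorem polyDim_ge (A : Set E) : -1 ≤ polyDim A := by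
  unfold polyDim
  split_ifs <;> omega

theorem count_lemma {α β : Type*} {A : Set α} {B : Set β} (hA : A.Finite) (hB : B.Finite)
    (f : α → ℕ) (g : β → ℕ) (n : ℕ) :
    {p : α × β | p.1 ∈ A ∧ p.2 ∈ B ∧ f p.1 + g p.2 = n}.ncard =
      ∑ a ∈ Finset.range (n + 1), {x | x ∈ A ∧ f x = a}.ncard * {y | y ∈ B ∧ g y = n - a}.ncard := by
  classical
  obtain ⟨A, rfl⟩ := hA.exists_finset_coe
  obtain ⟨B, rfl⟩ := hB.exists_finset_coe
  have e0 : {p : α × β | p.1 ∈ (A : Set α) ∧ p.2 ∈ (B : Set β) ∧ f p.1 + g p.2 = n} =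
      (((A ×ˢ B).filter (fun p => f p.1 + g p.2 = n) : Finset (α × β)) : Set (α × β)) := by
    ext; simp [and_assoc]
  rw [e0, ncard_coe_finset, Finset.card_eq_sum_card_fiberwise (f := fun p => f p.1)
    (t := Finset.range (n + 1))]
  · refine Finset.sum_congr rfl fun a ha => ?_
    have e1 : {x | x ∈ (A : Set α) ∧ f x = a} = ((A.filter (fun x => f x = a) : Finset α) : Set α) := by
      ext; simp
    have e2 : {y | y ∈ (B : Set β) ∧ g y = n - a} =
        ((B.filter (fun y => g y = n - a) : Finset β) : Set β) := by
      ext; simp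
    rw [e1, e2, ncard_coe_finset, ncard_coe_finset, ← Finset.card_product]
    congr 1
    ext ⟨x, y⟩
    simp only [Finset.mem_filter, Finset.mem_product, Finset.mem_range] at ha ⊢
    constructor
    · rintro ⟨⟨⟨h1, h2⟩, h3⟩, h4⟩
      exact ⟨⟨h1, h4⟩, h2, by omega⟩
    · rintro ⟨⟨h1, h4⟩, h2, h3⟩
      exact ⟨⟨⟨h1, h2⟩, by omega⟩, h4⟩
  · intro p hp
    simp at hp ⊢
    omega

/-- Simplex faces whose relation to the origin is prescribed by `b`. -/
def SF (P : Set E) (b : Prop) : Set (Set E) :=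
  {F | ((IsExtreme ℝ P F ∧ Convex ℝ F) ∧ (vertexCount F : ℤ) = polyDim F + 1) ∧ ((0 : E) ∈ F ↔ b)}

theorem SF_finite {P : Set E} (hP : IsPolytope P) (b : Prop) : (SF P b).Finite :=
  (faces_finite hP).subset fun _ h => h.1.1

open Classical in
theorem count_SF {P : Set E} {Q : Set W} (hP : IsPolytope P) (hQ : IsPolytope Q)
    (h0P : (0 : E) ∈ P.extremePoints ℝ) (h0Q : (0 : W) ∈ Q.extremePoints ℝ) (b : Prop) (j : ℕ) :
    {G | G ∈ SF (subdirectSum P Q) b ∧ polyDim G = (j : ℤ) - 1}.ncard =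
      {p : Set E × Set W | p.1 ∈ SF P b ∧ p.2 ∈ SF Q b ∧
        (polyDim p.1 + 1).toNat + (polyDim p.2 + 1).toNat = j + if b then 1 else 0}.ncard := by
  have hPQ := J_polytope hP hQ
  have h00 : (0 : E) ∈ P ↔ (0 : W) ∈ Q := by simp [h0P.1, h0Q.1]
  -- the key numerical facts
  have key : ∀ (A : Set E) (B : Set W), IsExtreme ℝ P A → Convex ℝ A → IsExtreme ℝ Q B →
      Convex ℝ B → ((0 : E) ∈ A ↔ b) → ((0 : W) ∈ B ↔ b) →
      ((0 : E × W) ∈ subdirectSum A B ↔ b) ∧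
      polyDim (subdirectSum A B) + (if b then 1 else 0) = polyDim A + polyDim B + 1 ∧
      (vertexCount (subdirectSum A B) : ℤ) + (if b then 1 else 0) = vertexCount A + vertexCount B ∧
      polyDim A + 1 ≤ vertexCount A ∧ polyDim B + 1 ≤ vertexCount B := by
    intro A B hAP hA hBQ hB h0A h0B
    have hAp := face_polytope hP hAP hA
    have hBp := face_polytope hQ hBQ hB
    have h := h0A.trans h0B.symm
    have h0J : (0 : E × W) ∈ subdirectSum A B ↔ b :=
      (inl_mem_J_iff hA hB h (p := 0)).trans h0A
    have hJ := J_face hP.convex hQ.convex h0P.1 h0Q.1 hAP hBQ hA hB h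
    refine ⟨h0J, ?_, ?_, polyDim_add_one_le hAp, polyDim_add_one_le hBp⟩
    · have hr := finrank_J hAp hBp
      split_ifs with hb
      · have r1 := polyDim_of_mem (h0J.2 hb)
        have r2 := polyDim_of_mem (h0A.2 hb)
        have r3 := polyDim_of_mem (h0B.2 hb)
        omega
      · have r1 := polyDim_of_notMem hPQ hJ (J_convex A B) (inl_mem_J Q h0P.1)
          (fun h' => hb (h0J.1 h'))
        have r2 := polyDim_of_notMem hP hAP hA h0P.1 (fun h' => hb (h0A.1 h'))
        have r3 := polyDim_of_notMem hQ hBQ hB h0Q.1 (fun h' => hb (h0B.1 h'))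
        omega
    · have hv := vertexCount_J hP hQ h0P h0Q hAP hBQ hA hB h
      simp only [h0A] at hv
      split_ifs at hv ⊢ <;> omega
  symm
  refine ncard_congr (fun p _ => subdirectSum p.1 p.2) ?_ ?_ ?_
  · rintro ⟨A, B⟩ ⟨⟨⟨⟨hAP, hA⟩, hvA⟩, h0A⟩, ⟨⟨⟨hBQ, hB⟩, hvB⟩, h0B⟩, hd⟩
    simp only at *
    obtain ⟨k1, k2, k3, k4, k5⟩ := key A B hAP hA hBQ hB h0A h0B
    have g1 := polyDim_ge A
    have g2 := polyDim_ge B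
    refine ⟨⟨⟨⟨J_face hP.convex hQ.convex h0P.1 h0Q.1 hAP hBQ hA hB (h0A.trans h0B.symm),
      J_convex A B⟩, ?_⟩, k1⟩, ?_⟩
    · split_ifs at * <;> omega
    · split_ifs at * <;> omega
  · rintro ⟨A, B⟩ ⟨A', B'⟩ ⟨⟨⟨⟨hAP, hA⟩, hvA⟩, h0A⟩, ⟨⟨⟨hBQ, hB⟩, hvB⟩, h0B⟩, hd⟩
      ⟨⟨⟨⟨hAP', hA'⟩, hvA'⟩, h0A'⟩, ⟨⟨⟨hBQ', hB'⟩, hvB'⟩, h0B'⟩, hd'⟩ heq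
    simp only at *
    ext x
    · rw [← inl_mem_J_iff hA hB (h0A.trans h0B.symm),
        ← inl_mem_J_iff hA' hB' (h0A'.trans h0B'.symm), heq]
    · rw [← inr_mem_J_iff hA hB (h0A.trans h0B.symm),
        ← inr_mem_J_iff hA' hB' (h0A'.trans h0B'.symm), heq]
  · rintro G ⟨⟨⟨⟨hG, hGc⟩, hv⟩, h0⟩, hd⟩
    have hAP := preL_face hP.convex hQ.convex h00 hG
    have hBQ := preR_face hP.convex hQ.convex h00 hG
    have hA := preL_convex hGc
    have hB := preR_convex hGc
    have hJ := J_pre hP.convex hQ.convex hG hGc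
    obtain ⟨k1, k2, k3, k4, k5⟩ := key _ _ hAP hA hBQ hB h0 h0
    rw [hJ] at k1 k2 k3
    have g1 := polyDim_ge {p | (p, (0 : W)) ∈ G}
    have g2 := polyDim_ge {q | ((0 : E), q) ∈ G}
    refine ⟨({p | (p, (0 : W)) ∈ G}, {q | ((0 : E), q) ∈ G}), ⟨⟨⟨⟨hAP, hA⟩, ?_⟩, h0⟩, ⟨⟨⟨hBQ, hB⟩, ?_⟩, h0⟩, ?_⟩, hJ⟩
    all_goals simp only
    all_goals split_ifs at * <;> omega

theorem simpCount0_eq {P : Set E} (hP : IsPolytope P) (a : ℕ) :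
    simpCount0 P ((a : ℤ) - 1) = {F | F ∈ SF P True ∧ (polyDim F + 1).toNat = a}.ncard := by
  unfold simpCount0
  congr 1
  ext F
  have g := polyDim_ge F
  simp only [mem_ofPred_eq, SF, iff_true, ← simplex_face_iff hP]
  constructor
  · rintro ⟨h1, h2, h3, h4⟩
    exact ⟨⟨⟨h1, h2⟩, h4⟩, by omega⟩
  · rintro ⟨⟨⟨h1, h2⟩, h4⟩, h3⟩
    exact ⟨h1, h2, by omega, h4⟩

theorem simpCount1_eq {P : Set E} (hP : IsPolytope P) (a : ℕ) :
    simpCount1 P ((a : ℤ) - 1) = {F | F ∈ SF P False ∧ (polyDim F + 1).toNat = a}.ncard := by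
  unfold simpCount1
  congr 1
  ext F
  have g := polyDim_ge F
  simp only [mem_ofPred_eq, SF, iff_false, ← simplex_face_iff hP]
  constructor
  · rintro ⟨h1, h2, h3, h4⟩
    exact ⟨⟨⟨h1, h2⟩, h4⟩, by omega⟩
  · rintro ⟨⟨⟨h1, h2⟩, h4⟩, h3⟩
    exact ⟨h1, h2, by omega, h4⟩

theorem simpCount_eq {P : Set E} (hP : IsPolytope P) (k : ℤ) :
    simpCount P k = {F | F ∈ SF P True ∧ polyDim F = k}.ncard
      + {F | F ∈ SF P False ∧ polyDim F = k}.ncard := by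
  rw [← ncard_union_eq _ ((SF_finite hP _).subset fun _ h => h.1)
    ((SF_finite hP _).subset fun _ h => h.1)]
  · unfold simpCount
    congr 1
    ext F
    simp only [mem_union, mem_ofPred_eq, SF, iff_false, iff_true, ← simplex_face_iff hP]
    tauto
  · rw [disjoint_left]
    rintro F ⟨⟨-, h⟩, -⟩ ⟨⟨-, h'⟩, -⟩
    exact h'.1 (h.2 trivial)

end Helpers


/-- the simplex-counting polynomial identity
`S_{P∨Q}(x) = (1/x)·S⁰_P(x)·S⁰_Q(x) + S¹_P(x)·S¹_Q(x)`, stated coefficient-wise: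
the coefficient of `x^j` counts simplex faces of dimension `j - 1`. -/
theorem subdirectSum_simplex_poly {E F : Type*} [AddCommGroup E] [Module ℝ E]
    [AddCommGroup F] [Module ℝ F] (P : Set E) (Q : Set F)
    (hP : IsPolytope P) (hQ : IsPolytope Q)
    (h0P : (0 : E) ∈ P.extremePoints ℝ) (h0Q : (0 : F) ∈ Q.extremePoints ℝ) :
    ∀ j : ℕ, simpCount (subdirectSum P Q) ((j : ℤ) - 1)
      = (∑ a ∈ Finset.range (j + 2),
          simpCount0 P ((a : ℤ) - 1) * simpCount0 Q (((j + 1 - a : ℕ) : ℤ) - 1))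
        + ∑ a ∈ Finset.range (j + 1),
          simpCount1 P ((a : ℤ) - 1) * simpCount1 Q (((j - a : ℕ) : ℤ) - 1) := by
  intro j
  rw [simpCount_eq (J_polytope hP hQ), count_SF hP hQ h0P h0Q, count_SF hP hQ h0P h0Q,
    count_lemma (SF_finite hP _) (SF_finite hQ _) (fun A => (polyDim A + 1).toNat)
      (fun B => (polyDim B + 1).toNat),
    count_lemma (SF_finite hP _) (SF_finite hQ _) (fun A => (polyDim A + 1).toNat)
      (fun B => (polyDim B + 1).toNat)]
  simp only [simpCount0_eq hP, simpCount0_eq hQ, simpCount1_eq hP, simpCount1_eq hQ,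
    if_true, if_false, add_zero]
end

section
/- If finite posets A and B satisfy s_k(O(A)) ≤ s_k(C(A)) and s_k(O(B)) ≤ s_k(C(B)) for all k, then s_k(O(A ⊔ B)) ≤ s_k(C(A ⊔ B)) for all k. -/
open Set

variable {E : Type*} [AddCommGroup E] [Module ℝ E]

/-- The order polytope of a poset. -/
def orderPolytope (α : Type*) [PartialOrder α] : Set (α → ℝ) :=
  {x | (∀ p, 0 ≤ x p ∧ x p ≤ 1) ∧ ∀ p q : α, p ≤ q → x p ≤ x q}

/-- The chain polytope of a poset. -/
def chainPolytope (α : Type*) [PartialOrder α] : Set (α → ℝ) :=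
  {x | (∀ p, 0 ≤ x p) ∧ ∀ s : Finset α, IsChain (· ≤ ·) (s : Set α) → ∑ p ∈ s, x p ≤ 1}

open Classical in
/-- Characteristic vector of a subset. -/
noncomputable def chi {α : Type*} (S : Set α) : α → ℝ := fun p => if p ∈ S then 1 else 0

section Aux

/-- The set of `k`-dimensional simplex faces. -/
def simpFaces {V : Type*} [AddCommGroup V] [Module ℝ V] (P : Set V) (k : ℤ) : Set (Set V) :=
  {F : Set V | IsFaceOf F P ∧ IsSimplex F ∧ polyDim F = k}

lemma simpFaces_image {V W : Type*} [AddCommGroup V] [Module ℝ V] [AddCommGroup W] [Module ℝ W]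
    (e : V ≃ₗ[ℝ] W) (P : Set V) (k : ℤ) (F : Set V) (hF : F ∈ simpFaces P k) :
    e '' F ∈ simpFaces (e '' P) k := by
  obtain ⟨hf, ⟨⟨S, hS⟩, hv⟩, hd⟩ := hF
  have hdim : polyDim (e '' F) = polyDim F := by
    unfold polyDim
    simp only [Set.image_eq_empty]
    split_ifs with h
    · rfl
    · congr 1
      have := AffineMap.vectorSpan_image_eq_submodule_map (s := F) (e : V →ₗ[ℝ] W).toAffineMap
      have h2 : vectorSpan ℝ (e '' F) = Submodule.map (e : V →ₗ[ℝ] W) (vectorSpan ℝ F) := by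
        simpa using this.symm
      rw [h2]
      exact LinearEquiv.finrank_map_eq e _
  have hvert : vertexCount (e '' F) = vertexCount F := by
    unfold vertexCount
    rw [← image_extremePoints e F]
    exact Set.ncard_image_of_injective _ e.injective
  refine ⟨?_, ⟨?_, by rw [hvert, hdim]; exact hv⟩, by rw [hdim]; exact hd⟩
  · refine ⟨Set.image_mono hf.subset, ?_⟩
    rintro _ ⟨x, hx, rfl⟩ _ ⟨y, hy, rfl⟩ _ ⟨z, hz, rfl⟩ hseg
    refine ⟨x, hf.left_mem_of_mem_openSegment hx hy hz ?_, rfl⟩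
    obtain ⟨a, b, ha, hb, hab, h⟩ := hseg
    exact ⟨a, b, ha, hb, hab, e.injective (by simpa using h)⟩
  · classical
    refine ⟨S.image e, ?_⟩
    rw [hS, Finset.coe_image]
    exact (e : V →ₗ[ℝ] W).image_convexHull _

lemma simpCount_image {V W : Type*} [AddCommGroup V] [Module ℝ V] [AddCommGroup W] [Module ℝ W]
    (e : V ≃ₗ[ℝ] W) (P : Set V) (k : ℤ) : simpCount (e '' P) k = simpCount P k := by
  have : simpFaces (e '' P) k = (fun F => e '' F) '' simpFaces P k := by
    ext G
    constructor
    · intro hG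
      refine ⟨e.symm '' G, ?_, ?_⟩
      · have := simpFaces_image e.symm _ k G hG
        rwa [← Set.image_comp, show (e.symm ∘ e : V → V) = id by ext; simp, Set.image_id] at this
      · simp only
        rw [← Set.image_comp, show (e ∘ e.symm : W → W) = id by ext; simp, Set.image_id]
    · rintro ⟨F, hF, rfl⟩
      exact simpFaces_image e P k F hF
  change (simpFaces (e '' P) k).ncard = (simpFaces P k).ncard
  rw [this]
  exact Set.ncard_image_of_injective _ e.injective.image_injective

/-- Sets cut out by finitely many linear inequalities. -/
def IsHPoly {V : Type*} [AddCommGroup V] [Module ℝ V] (P : Set V) : Prop :=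
  ∃ (n : ℕ) (f : Fin n → V →ₗ[ℝ] ℝ) (c : Fin n → ℝ), P = {x | ∀ i, f i x ≤ c i}

lemma IsHPoly.of_finite {V : Type*} [AddCommGroup V] [Module ℝ V] {ι : Type*} [Finite ι]
    (f : ι → V →ₗ[ℝ] ℝ) (c : ι → ℝ) : IsHPoly {x | ∀ i, f i x ≤ c i} := by
  obtain ⟨n, ⟨e⟩⟩ := Finite.exists_equiv_fin ι
  refine ⟨n, f ∘ e.symm, c ∘ e.symm, ?_⟩
  ext x
  simp only [Set.mem_setOf_eq, Function.comp]
  exact ⟨fun h i => h _, fun h i => by simpa using h (e i)⟩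

lemma IsHPoly.finite_extreme {V : Type*} [AddCommGroup V] [Module ℝ V] {P : Set V}
    (hP : IsHPoly P) : {F : Set V | IsExtreme ℝ P F}.Finite := by
  obtain ⟨n, f, c, rfl⟩ := hP
  set P := {x | ∀ i, f i x ≤ c i} with hPdef
  let act : V → Set (Fin n) := fun x => {i | f i x = c i}
  have key : ∀ F, IsExtreme ℝ P F → ∀ x ∈ F, ∀ y ∈ P, act x = act y → y ∈ F := by
    intro F hF x hx y hy hxy
    -- find `t`
    have hxP : ∀ i, f i x ≤ c i := hF.subset hx
    have ht : ∃ t : ℝ, 0 < t ∧ ∀ i, f i x + t * (f i x - f i y) ≤ c i := by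
      have hev : ∀ i, ∀ᶠ t in nhdsWithin (0:ℝ) (Set.Ioi 0),
          f i x + t * (f i x - f i y) ≤ c i := by
        intro i
        by_cases hi : f i x = c i
        · have : f i y = c i := by
            have : i ∈ act y := hxy ▸ (show i ∈ act x from hi)
            exact this
          refine Filter.Eventually.of_forall fun t => ?_
          rw [hi, this]; simp
        · have hlt : f i x < c i := lt_of_le_of_ne (hxP i) hi
          have hc : Continuous fun t : ℝ => f i x + t * (f i x - f i y) := by fun_prop
          have : ∀ᶠ t in nhds (0:ℝ), f i x + t * (f i x - f i y) < c i :=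
            hc.continuousAt.eventually_lt_const (by simpa using hlt)
          exact (this.filter_mono nhdsWithin_le_nhds).mono fun t h => h.le
      have := (Filter.eventually_all.2 hev).and self_mem_nhdsWithin
      obtain ⟨t, h1, h2⟩ := this.exists
      exact ⟨t, h2, h1⟩
    obtain ⟨t, ht0, ht⟩ := ht
    have hz : x + t • (x - y) ∈ P := fun i => by simpa using ht i
    refine hF.left_mem_of_mem_openSegment hy hz hx ?_
    refine ⟨t / (1 + t), 1 / (1 + t), by positivity, by positivity, by field_simp; ring, ?_⟩
    have : (1 + t) ≠ 0 := by positivity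
    match_scalars <;> field_simp <;> ring
  refine Set.Finite.of_finite_image (f := fun F => act '' F) (Set.toFinite _) ?_
  intro F hF G hG h
  have aux : ∀ F G, IsExtreme ℝ P F → IsExtreme ℝ P G → act '' F = act '' G → F ⊆ G := by
    intro F G hF hG h y hy
    have : act y ∈ act '' G := h ▸ Set.mem_image_of_mem _ hy
    obtain ⟨x, hx, hxy⟩ := this
    exact key G hG x hx y (hF.subset hy) hxy
  exact Set.Subset.antisymm (aux F G hF hG h) (aux G F hG hF h.symm)

lemma IsHPoly.finite_simpFaces {V : Type*} [AddCommGroup V] [Module ℝ V] {P : Set V}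
    (hP : IsHPoly P) (k : ℤ) : (simpFaces P k).Finite :=
  hP.finite_extreme.subset fun _ hF => hF.1

lemma orderPolytope_isHPoly (A : Type*) [Fintype A] [PartialOrder A] :
    IsHPoly (orderPolytope A) := by
  let ι := A ⊕ A ⊕ {r : A × A // r.1 ≤ r.2}
  let pr : A → (A → ℝ) →ₗ[ℝ] ℝ := fun p => LinearMap.proj p
  let f : ι → (A → ℝ) →ₗ[ℝ] ℝ :=
    Sum.elim (fun p => - pr p) (Sum.elim pr (fun r => pr r.1.1 - pr r.1.2))
  let c : ι → ℝ := Sum.elim (fun _ => 0) (Sum.elim (fun _ => 1) (fun _ => 0))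
  have : orderPolytope A = {x | ∀ i, f i x ≤ c i} := by
    ext x
    simp only [orderPolytope, Set.mem_setOf_eq, f, c, ι, pr, Sum.forall, Sum.elim_inl,
      Sum.elim_inr, LinearMap.neg_apply, LinearMap.sub_apply, LinearMap.proj_apply,
      Left.neg_nonpos_iff, sub_nonpos, Subtype.forall, Prod.forall, forall_and, and_assoc]
  rw [this]
  exact IsHPoly.of_finite f c

lemma chainPolytope_isHPoly (A : Type*) [Fintype A] [PartialOrder A] :
    IsHPoly (chainPolytope A) := by
  let ι := A ⊕ {s : Finset A // IsChain (· ≤ ·) (s : Set A)}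
  let pr : A → (A → ℝ) →ₗ[ℝ] ℝ := fun p => LinearMap.proj p
  let f : ι → (A → ℝ) →ₗ[ℝ] ℝ :=
    Sum.elim (fun p => - pr p) (fun s => ∑ p ∈ s.1, pr p)
  let c : ι → ℝ := Sum.elim (fun _ => 0) (fun _ => 1)
  have : chainPolytope A = {x | ∀ i, f i x ≤ c i} := by
    ext x
    simp only [chainPolytope, Set.mem_setOf_eq, f, c, ι, pr, Sum.forall, Sum.elim_inl,
      Sum.elim_inr, LinearMap.neg_apply, LinearMap.sum_apply, LinearMap.proj_apply,
      Left.neg_nonpos_iff, Subtype.forall]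
  rw [this]
  exact IsHPoly.of_finite f c

/-- Restriction to the two summands. -/
def sumEquiv (A B : Type*) : (A ⊕ B → ℝ) ≃ₗ[ℝ] (A → ℝ) × (B → ℝ) where
  toFun x := (fun a => x (Sum.inl a), fun b => x (Sum.inr b))
  invFun y := Sum.elim y.1 y.2
  map_add' _ _ := rfl
  map_smul' _ _ := rfl
  left_inv x := by ext (a | b) <;> rfl
  right_inv y := rfl

lemma image_eq_of_iff {A B : Type*} (P : Set (A ⊕ B → ℝ)) (Q : Set (A → ℝ)) (R : Set (B → ℝ))
    (h : ∀ x, x ∈ P ↔ (fun a => x (Sum.inl a)) ∈ Q ∧ (fun b => x (Sum.inr b)) ∈ R) :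
    sumEquiv A B '' P = Q ×ˢ R := by
  ext y
  constructor
  · rintro ⟨x, hx, rfl⟩
    exact (h x).1 hx
  · intro hy
    exact ⟨Sum.elim y.1 y.2, (h _).2 hy, rfl⟩

lemma orderPolytope_sum (A B : Type*) [PartialOrder A] [PartialOrder B] :
    sumEquiv A B '' orderPolytope (A ⊕ B) = orderPolytope A ×ˢ orderPolytope B := by
  apply image_eq_of_iff
  intro x
  simp only [orderPolytope, Set.mem_setOf_eq, Sum.forall, Sum.inl_le_inl_iff, Sum.inr_le_inr_iff,
    Sum.not_inl_le_inr, Sum.not_inr_le_inl, false_imp_iff, implies_true, and_true, true_and]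
  tauto

lemma chainPolytope_sum (A B : Type*) [PartialOrder A] [PartialOrder B] :
    sumEquiv A B '' chainPolytope (A ⊕ B) = chainPolytope A ×ˢ chainPolytope B := by
  apply image_eq_of_iff
  intro x
  constructor
  · rintro ⟨h0, h1⟩
    refine ⟨⟨fun p => h0 _, fun s hs => ?_⟩, ⟨fun p => h0 _, fun s hs => ?_⟩⟩
    · have := h1 (s.map Function.Embedding.inl) (by
        rw [Finset.coe_map]
        rintro _ ⟨a, ha, rfl⟩ _ ⟨b, hb, rfl⟩ hab
        have := hs ha hb (fun h => hab (by rw [h]))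
        simpa using this)
      simpa using this
    · have := h1 (s.map Function.Embedding.inr) (by
        rw [Finset.coe_map]
        rintro _ ⟨a, ha, rfl⟩ _ ⟨b, hb, rfl⟩ hab
        have := hs ha hb (fun h => hab (by rw [h]))
        simpa using this)
      simpa using this
  · rintro ⟨⟨h0, h1⟩, ⟨g0, g1⟩⟩
    refine ⟨?_, fun s hs => ?_⟩
    · rintro (a | b)
      · exact h0 a
      · exact g0 b
    · rw [Finset.sum_sum_eq_sum_toLeft_add_sum_toRight]
      have hl : IsChain (· ≤ ·) (s.toLeft : Set A) := by
        intro a ha b hb hab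
        have := hs (x := Sum.inl a) (y := Sum.inl b) (by simpa using ha) (by simpa using hb)
          (by simpa using hab)
        simpa using this
      have hr : IsChain (· ≤ ·) (s.toRight : Set B) := by
        intro a ha b hb hab
        have := hs (x := Sum.inr a) (y := Sum.inr b) (by simpa using ha) (by simpa using hb)
          (by simpa using hab)
        simpa using this
      rcases s.toLeft.eq_empty_or_nonempty with h | ⟨a, ha⟩
      · rw [h]; simpa using g1 _ hr
      · have : s.toRight = ∅ := by
          by_contra hne
          obtain ⟨b, hb⟩ := Finset.nonempty_iff_ne_empty.2 hne
          have := hs (x := Sum.inl a) (y := Sum.inr b) (by simpa using ha) (by simpa using hb)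
            (by simp)
          simp at this
        rw [this]; simpa using h1 _ hl

section Normed

variable {V W : Type*} [NormedAddCommGroup V] [NormedSpace ℝ V] [FiniteDimensional ℝ V]
  [NormedAddCommGroup W] [NormedSpace ℝ W] [FiniteDimensional ℝ W]

lemma polyDim_nonempty {F : Set V} (h : F.Nonempty) :
    polyDim F = (Module.finrank ℝ (vectorSpan ℝ F) : ℤ) := by
  rw [polyDim, if_neg h.ne_empty]

lemma nonempty_of_polyDim {F : Set V} (h : 0 ≤ polyDim F) : F.Nonempty := by
  rw [Set.nonempty_iff_ne_empty]
  rintro rfl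
  simp [polyDim] at h

lemma polyDim_add_one_le_s12 {F : Set V} (hF : IsPolytope F) (hne : F.Nonempty) :
    polyDim F + 1 ≤ vertexCount F := by
  obtain ⟨S, rfl⟩ := hF
  set F := convexHull ℝ (S : Set V) with hFdef
  have hsub : F.extremePoints ℝ ⊆ S := extremePoints_convexHull_subset
  have hfin : (F.extremePoints ℝ).Finite := S.finite_toSet.subset hsub
  have hcomp : IsCompact F := S.finite_toSet.isCompact_convexHull ℝ
  have hKM : convexHull ℝ (F.extremePoints ℝ) = F := by
    rw [← (hfin.isClosed_convexHull ℝ).closure_eq]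
    exact closure_convexHull_extremePoints hcomp (convex_convexHull ℝ _)
  have hspan : vectorSpan ℝ F = vectorSpan ℝ (F.extremePoints ℝ) := by
    conv_lhs => rw [← hKM]
    rw [← direction_affineSpan, affineSpan_convexHull, direction_affineSpan]
  have hen : (F.extremePoints ℝ).Nonempty := by
    rw [← convexHull_nonempty_iff (𝕜 := ℝ), hKM]; exact hne
  rw [polyDim_nonempty hne, hspan, vertexCount]
  generalize F.extremePoints ℝ = T at *
  lift T to Finset V using hfin
  rw [Set.ncard_coe_finset]
  have hc : T.card = (T.card - 1) + 1 := by
    have : 0 < T.card := Finset.card_pos.2 (by simpa using hen)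
    omega
  classical
  have := finrank_vectorSpan_image_finset_le ℝ (id : V → V) T hc
  rw [Finset.image_id] at this
  omega

lemma simplex_zero {F : Set V} (h : polyDim F = 0) : ∃ x, F = {x} := by
  have hne := nonempty_of_polyDim h.ge
  rw [polyDim_nonempty hne] at h
  have h0 : vectorSpan ℝ F = ⊥ := Submodule.finrank_eq_zero.1 (by exact_mod_cast h)
  exact (Set.exists_eq_singleton_iff_nonempty_subsingleton).2
    ⟨hne, (vectorSpan_eq_bot_iff_subsingleton ℝ).1 h0⟩

lemma vectorSpan_prod' {F : Set V} {G : Set W} (hF : F.Nonempty) (hG : G.Nonempty) :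
    vectorSpan ℝ (F ×ˢ G) = (vectorSpan ℝ F).prod (vectorSpan ℝ G) := by
  apply le_antisymm
  · rw [vectorSpan_def, Submodule.span_le]
    rintro _ ⟨⟨a, b⟩, ⟨ha, hb⟩, ⟨c, d⟩, ⟨hc, hd⟩, rfl⟩
    exact ⟨vsub_mem_vectorSpan ℝ ha hc, vsub_mem_vectorSpan ℝ hb hd⟩
  · obtain ⟨f, hf⟩ := hF
    obtain ⟨g, hg⟩ := hG
    have h1 : vectorSpan ℝ F ≤ (vectorSpan ℝ (F ×ˢ G)).comap (LinearMap.inl ℝ V W) := by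
      rw [vectorSpan_def, Submodule.span_le]
      rintro _ ⟨a, ha, c, hc, rfl⟩
      have := vsub_mem_vectorSpan ℝ (s := F ×ˢ G) (p₁ := (a, g)) (p₂ := (c, g)) ⟨ha, hg⟩ ⟨hc, hg⟩
      simpa using this
    have h2 : vectorSpan ℝ G ≤ (vectorSpan ℝ (F ×ˢ G)).comap (LinearMap.inr ℝ V W) := by
      rw [vectorSpan_def, Submodule.span_le]
      rintro _ ⟨a, ha, c, hc, rfl⟩
      have := vsub_mem_vectorSpan ℝ (s := F ×ˢ G) (p₁ := (f, a)) (p₂ := (f, c)) ⟨hf, ha⟩ ⟨hf, hc⟩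
      simpa using this
    rintro ⟨v, w⟩ ⟨hv, hw⟩
    have := add_mem (Submodule.mem_comap.1 (h1 hv)) (Submodule.mem_comap.1 (h2 hw))
    simpa using this

lemma polyDim_prod {F : Set V} {G : Set W} (hF : F.Nonempty) (hG : G.Nonempty) :
    polyDim (F ×ˢ G) = polyDim F + polyDim G := by
  rw [polyDim_nonempty hF, polyDim_nonempty hG, polyDim_nonempty (hF.prod hG),
    vectorSpan_prod' hF hG]
  let e : (vectorSpan ℝ F).prod (vectorSpan ℝ G) ≃ₗ[ℝ] vectorSpan ℝ F × vectorSpan ℝ G :=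
    { toFun := fun x => (⟨x.1.1, x.2.1⟩, ⟨x.1.2, x.2.2⟩)
      invFun := fun y => ⟨(y.1.1, y.2.1), y.1.2, y.2.2⟩
      map_add' := fun _ _ => rfl
      map_smul' := fun _ _ => rfl
      left_inv := fun _ => rfl
      right_inv := fun _ => rfl }
  rw [e.finrank_eq, Module.finrank_prod]
  push_cast
  rfl

lemma vertexCount_prod (F : Set V) (G : Set W) :
    vertexCount (F ×ˢ G) = vertexCount F * vertexCount G := by
  rw [vertexCount, extremePoints_prod, Set.ncard_prod]; rfl

lemma IsPolytope.prod {F : Set V} {G : Set W} (hF : IsPolytope F) (hG : IsPolytope G) :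
    IsPolytope (F ×ˢ G) := by
  obtain ⟨S, rfl⟩ := hF
  obtain ⟨T, rfl⟩ := hG
  exact ⟨S ×ˢ T, by rw [Finset.coe_product, convexHull_prod]⟩

lemma isFaceOf_prod {P F : Set V} {Q G : Set W} (hF : IsFaceOf F P) (hG : IsFaceOf G Q) :
    IsFaceOf (F ×ˢ G) (P ×ˢ Q) := by
  refine ⟨Set.prod_mono hF.subset hG.subset, ?_⟩
  rintro ⟨x1, x2⟩ ⟨hx1, hx2⟩ ⟨y1, y2⟩ ⟨hy1, hy2⟩ ⟨z1, z2⟩ ⟨hz1, hz2⟩ ⟨a, b, ha, hb, hab, h⟩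
  simp only [Prod.smul_mk, Prod.mk_add_mk, Prod.mk.injEq] at h
  exact ⟨hF.left_mem_of_mem_openSegment hx1 hy1 hz1 ⟨a, b, ha, hb, hab, h.1⟩,
    hG.left_mem_of_mem_openSegment hx2 hy2 hz2 ⟨a, b, ha, hb, hab, h.2⟩⟩

lemma face_decomp {P : Set V} {Q : Set W} {H : Set (V × W)} (hH : IsFaceOf H (P ×ˢ Q))
    (hpol : IsPolytope H) (hne : H.Nonempty) :
    ∃ F G, H = F ×ˢ G ∧ IsFaceOf F P ∧ IsFaceOf G Q ∧ IsPolytope F ∧ IsPolytope G ∧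
      F.Nonempty ∧ G.Nonempty := by
  have hconv : Convex ℝ H := by
    obtain ⟨S, rfl⟩ := hpol
    exact convex_convexHull ℝ _
  refine ⟨LinearMap.fst ℝ V W '' H, LinearMap.snd ℝ V W '' H, ?_, ?_, ?_, ?_, ?_,
    hne.image _, hne.image _⟩
  · apply Set.Subset.antisymm
    · intro x hx
      exact ⟨⟨x, hx, rfl⟩, ⟨x, hx, rfl⟩⟩
    · rintro ⟨a, b⟩ ⟨⟨⟨a1, b1⟩, h1, ha⟩, ⟨⟨a2, b2⟩, h2, hb⟩⟩
      simp only [LinearMap.fst_apply, LinearMap.snd_apply] at ha hb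
      subst ha hb
      have hm := hconv h1 h2 (a := 1/2) (b := 1/2) (by norm_num) (by norm_num) (by norm_num)
      have p1 := hH.subset h1
      have p2 := hH.subset h2
      refine hH.left_mem_of_mem_openSegment (x := (a1, b2)) (y := (a2, b1)) ⟨p1.1, p2.2⟩
        ⟨p2.1, p1.2⟩ hm ⟨1/2, 1/2, by norm_num, by norm_num, by norm_num, ?_⟩
      simp [add_comm]
  · refine ⟨?_, ?_⟩
    · rintro _ ⟨x, hx, rfl⟩
      exact (hH.subset hx).1
    · rintro x hx y hy _ ⟨⟨z, w⟩, hz, rfl⟩ ⟨a, b, ha, hb, hab, h⟩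
      have hw := (hH.subset hz).2
      refine ⟨(x, w), ?_, rfl⟩
      refine hH.left_mem_of_mem_openSegment (y := (y, w)) ⟨hx, hw⟩ ⟨hy, hw⟩ hz
        ⟨a, b, ha, hb, hab, ?_⟩
      ext
      · simpa using h
      · simp [← add_smul, hab]
  · refine ⟨?_, ?_⟩
    · rintro _ ⟨x, hx, rfl⟩
      exact (hH.subset hx).2
    · rintro x hx y hy _ ⟨⟨w, z⟩, hz, rfl⟩ ⟨a, b, ha, hb, hab, h⟩
      have hw := (hH.subset hz).1
      refine ⟨(w, x), ?_, rfl⟩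
      refine hH.left_mem_of_mem_openSegment (y := (w, y)) ⟨hw, hx⟩ ⟨hw, hy⟩ hz
        ⟨a, b, ha, hb, hab, ?_⟩
      ext
      · simp [← add_smul, hab]
      · simpa using h
  · classical
    obtain ⟨S, rfl⟩ := hpol
    exact ⟨S.image _, by rw [Finset.coe_image, LinearMap.image_convexHull]⟩
  · classical
    obtain ⟨S, rfl⟩ := hpol
    exact ⟨S.image _, by rw [Finset.coe_image, LinearMap.image_convexHull]⟩

/-- Products of simplex faces, one of which is a point. -/
def prodFaces (P : Set V) (Q : Set W) (k l : ℤ) : Set (Set (V × W)) :=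
  (fun p : Set V × Set W => p.1 ×ˢ p.2) '' (simpFaces P k ×ˢ simpFaces Q l)

lemma prodFaces_ncard (P : Set V) (Q : Set W) {k l : ℤ} (hk : 0 ≤ k) (hl : 0 ≤ l) :
    (prodFaces P Q k l).ncard = simpCount P k * simpCount Q l := by
  rw [prodFaces, Set.ncard_image_of_injOn, Set.ncard_prod]
  · rfl
  · rintro ⟨F, G⟩ ⟨hF, hG⟩ ⟨F', G'⟩ - h
    have hF := nonempty_of_polyDim (hk.trans_eq hF.2.2.symm)
    have hG := nonempty_of_polyDim (hl.trans_eq hG.2.2.symm)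
    obtain ⟨h1, h2⟩ := (Set.prod_eq_prod_iff_of_nonempty (hF.prod hG)).1 h
    exact Prod.ext h1 h2

lemma simpFaces_prod (P : Set V) (Q : Set W) {k : ℤ} (hk : 0 ≤ k) :
    simpFaces (P ×ˢ Q) k = prodFaces P Q k 0 ∪ prodFaces P Q 0 k := by
  have hmem : ∀ k l : ℤ, 0 ≤ k → 0 ≤ l → (k = 0 ∨ l = 0) →
      prodFaces P Q k l ⊆ simpFaces (P ×ˢ Q) (k + l) := by
    rintro k l hk hl hkl _ ⟨⟨F, G⟩, ⟨⟨f1, ⟨f2, f3⟩, f4⟩, ⟨g1, ⟨g2, g3⟩, g4⟩⟩, rfl⟩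
    simp only at *
    have hF := nonempty_of_polyDim (hk.trans_eq f4.symm)
    have hG := nonempty_of_polyDim (hl.trans_eq g4.symm)
    refine ⟨isFaceOf_prod f1 g1, ⟨f2.prod g2, ?_⟩, ?_⟩
    · rw [vertexCount_prod, polyDim_prod hF hG]
      push_cast
      rw [f3, g3, f4, g4]
      rcases hkl with rfl | rfl <;> ring
    · rw [polyDim_prod hF hG, f4, g4]
  apply Set.Subset.antisymm
  · rintro H ⟨hf, ⟨hp, hv⟩, hd⟩
    have hne := nonempty_of_polyDim (hk.trans_eq hd.symm)
    obtain ⟨F, G, rfl, f1, g1, f2, g2, hF, hG⟩ := face_decomp hf hp hne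
    have f3 := polyDim_add_one_le_s12 f2 hF
    have g3 := polyDim_add_one_le_s12 g2 hG
    rw [vertexCount_prod, polyDim_prod hF hG] at hv
    rw [polyDim_prod hF hG] at hd
    push_cast at hv
    have f0 : 0 ≤ polyDim F := by rw [polyDim_nonempty hF]; positivity
    have g0 : 0 ≤ polyDim G := by rw [polyDim_nonempty hG]; positivity
    have hz : polyDim F * polyDim G = 0 := by
      apply le_antisymm _ (mul_nonneg f0 g0)
      nlinarith [mul_le_mul f3 g3 (by positivity) (by positivity)]
    rcases mul_eq_zero.1 hz with h | h
    · right
      obtain ⟨x, rfl⟩ := simplex_zero h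
      have v1 : vertexCount ({x} : Set V) = 1 := by simp [vertexCount]
      rw [v1, h] at hv
      rw [h] at hd
      refine ⟨(_, _), ⟨⟨f1, ⟨f2, ?_⟩, h⟩, ⟨g1, ⟨g2, ?_⟩, ?_⟩⟩, rfl⟩
      · rw [v1, h]; simp
      · simpa using hv
      · simpa using hd
    · left
      obtain ⟨x, rfl⟩ := simplex_zero h
      have v1 : vertexCount ({x} : Set W) = 1 := by simp [vertexCount]
      rw [v1, h] at hv
      rw [h] at hd
      refine ⟨(_, _), ⟨⟨f1, ⟨f2, ?_⟩, ?_⟩, ⟨g1, ⟨g2, ?_⟩, h⟩⟩, rfl⟩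
      · simpa using hv
      · simpa using hd
      · rw [v1, h]; simp
  · apply Set.union_subset
    · simpa using hmem k 0 hk le_rfl (Or.inr rfl)
    · simpa using hmem 0 k le_rfl hk (Or.inl rfl)

lemma simpCount_prod_zero (P : Set V) (Q : Set W) :
    simpCount (P ×ˢ Q) 0 = simpCount P 0 * simpCount Q 0 := by
  rw [← prodFaces_ncard P Q le_rfl le_rfl]
  change (simpFaces (P ×ˢ Q) 0).ncard = _
  rw [simpFaces_prod P Q le_rfl, Set.union_self]

lemma simpCount_prod_pos {P : Set V} {Q : Set W} (hP : IsHPoly P) (hQ : IsHPoly Q) {k : ℤ}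
    (hk : 0 < k) :
    simpCount (P ×ˢ Q) k = simpCount P k * simpCount Q 0 + simpCount P 0 * simpCount Q k := by
  rw [← prodFaces_ncard P Q hk.le le_rfl, ← prodFaces_ncard P Q le_rfl hk.le]
  change (simpFaces (P ×ˢ Q) k).ncard = _
  rw [simpFaces_prod P Q hk.le]
  apply Set.ncard_union_eq
  · rw [Set.disjoint_left]
    rintro _ ⟨⟨F, G⟩, ⟨hF, hG⟩, rfl⟩ ⟨⟨F', G'⟩, ⟨hF', hG'⟩, h⟩
    have nF := nonempty_of_polyDim (hk.le.trans_eq hF.2.2.symm)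
    have nG := nonempty_of_polyDim (hG.2.2.ge)
    obtain ⟨h1, h2⟩ := (Set.prod_eq_prod_iff_of_nonempty (nF.prod nG)).1 h.symm
    have a := hF.2.2
    have b := hF'.2.2
    simp only at h1 a b
    rw [h1] at a
    omega
  · exact ((hP.finite_simpFaces _).prod (hQ.finite_simpFaces _)).image _
  · exact ((hP.finite_simpFaces _).prod (hQ.finite_simpFaces _)).image _

end Normed

lemma simpCount_neg {V : Type*} [AddCommGroup V] [Module ℝ V] (P : Set V) {k : ℤ} (hk : k < 0) :
    simpCount P k = if k = -1 then 1 else 0 := by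
  have hE : ∀ F : Set V, polyDim F = k → F = ∅ := by
    intro F h
    by_contra hne
    rw [polyDim, if_neg hne] at h
    omega
  have hd : polyDim (∅ : Set V) = -1 := by simp [polyDim]
  change (simpFaces P k).ncard = _
  split_ifs with h
  · have : simpFaces P k = {∅} := by
      ext F
      constructor
      · exact fun hF => hE F hF.2.2
      · rintro rfl
        refine ⟨⟨Set.empty_subset _, fun _ _ _ _ _ h => h.elim⟩, ⟨⟨∅, by simp⟩, ?_⟩, ?_⟩
        · rw [hd]; simp [vertexCount]
        · rw [hd, h]
    rw [this, Set.ncard_singleton]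
  · have : simpFaces P k = ∅ := by
      ext F
      simp only [Set.mem_empty_iff_false, iff_false]
      intro hF
      have h1 := hE F hF.2.2
      have h2 := hF.2.2
      rw [h1, hd] at h2
      exact h h2.symm
    rw [this, Set.ncard_empty]

end Aux

/-- the simplex-count inequality between order and chain polytopes is
preserved by disjoint unions of posets. -/
theorem disjoint_union_simpCount_ineq (A B : Type*) [Fintype A] [PartialOrder A]
    [Fintype B] [PartialOrder B]
    (hA : ∀ k : ℤ, simpCount (orderPolytope A) k ≤ simpCount (chainPolytope A) k)
    (hB : ∀ k : ℤ, simpCount (orderPolytope B) k ≤ simpCount (chainPolytope B) k) :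
    ∀ k : ℤ, simpCount (orderPolytope (A ⊕ B)) k ≤ simpCount (chainPolytope (A ⊕ B)) k := by
  intro k
  rw [← simpCount_image (sumEquiv A B), ← simpCount_image (sumEquiv A B), orderPolytope_sum,
    chainPolytope_sum]
  rcases lt_trichotomy k 0 with hk | rfl | hk
  · rw [simpCount_neg _ hk, simpCount_neg _ hk]
  · rw [simpCount_prod_zero, simpCount_prod_zero]
    exact Nat.mul_le_mul (hA 0) (hB 0)
  · rw [simpCount_prod_pos (orderPolytope_isHPoly A) (orderPolytope_isHPoly B) hk,
      simpCount_prod_pos (chainPolytope_isHPoly A) (chainPolytope_isHPoly B) hk]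
    exact Nat.add_le_add (Nat.mul_le_mul (hA k) (hB 0)) (Nat.mul_le_mul (hA 0) (hB k))
end

section
/- For any finite poset P satisfying s_k(O(P)) ≤ s_k(C(P)) for all k, the quantities α_P(x) := (1/x)S⁰_{C(P)}(x), β_P(x) := (1/x)S⁰_{O(P)}(x), γ_P(x) := S¹_{O(P)}(x), δ_P(x) := S¹_{C(P)}(x) satisfy 0 ≤ α_P ≤ β_P ≤ γ_P ≤ δ_P and 0 ≤ x(β_P − α_P) ≤ δ_P − γ_P, coefficient-wise. -/
open Set

variable {E : Type*} [AddCommGroup E] [Module ℝ E]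

theorem polytope_facts {α : Type*} [Fintype α] {F : Set (α → ℝ)} (hF : IsPolytope F) :
    (F.extremePoints ℝ).Finite ∧ convexHull ℝ (F.extremePoints ℝ) = F ∧ Convex ℝ F := by
  obtain ⟨S, rfl⟩ := hF
  have hfin : ((convexHull ℝ (S : Set (α → ℝ))).extremePoints ℝ).Finite :=
    S.finite_toSet.subset extremePoints_convexHull_subset
  refine ⟨hfin, ?_, convex_convexHull ℝ _⟩
  have := closure_convexHull_extremePoints (S.finite_toSet.isCompact_convexHull ℝ)
    (convex_convexHull ℝ _)
  rwa [(hfin.isClosed_convexHull ℝ).closure_eq] at this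

theorem vectorSpan_eq_span_of_zero_mem {α : Type*} {F : Set (α → ℝ)} (h0 : (0 : α → ℝ) ∈ F) :
    vectorSpan ℝ F = Submodule.span ℝ F := by
  rw [vectorSpan_eq_span_vsub_set_right ℝ h0]; simp

theorem vectorSpan_hull {α : Type*} (V : Set (α → ℝ)) :
    vectorSpan ℝ (convexHull ℝ V) = vectorSpan ℝ V := by
  rw [← direction_affineSpan, affineSpan_convexHull, direction_affineSpan]

theorem polyDim_of_zero_mem {α : Type*} {F : Set (α → ℝ)} (h0 : (0 : α → ℝ) ∈ F) :
    polyDim F = (Module.finrank ℝ (Submodule.span ℝ F) : ℤ) := by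
  rw [polyDim, if_neg (Set.nonempty_iff_ne_empty.1 ⟨0, h0⟩), vectorSpan_eq_span_of_zero_mem h0]

/-- The facet opposite to the origin. -/
theorem facet_facts {α : Type*} [Fintype α] {F : Set (α → ℝ)} (hF : IsSimplex F)
    (h0 : (0 : α → ℝ) ∈ F.extremePoints ℝ) :
    IsExtreme ℝ F (convexHull ℝ (F.extremePoints ℝ \ {0})) ∧
    IsSimplex (convexHull ℝ (F.extremePoints ℝ \ {0})) ∧
    polyDim (convexHull ℝ (F.extremePoints ℝ \ {0})) = polyDim F - 1 ∧
    (0 : α → ℝ) ∉ (convexHull ℝ (F.extremePoints ℝ \ {0})) ∧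
    (convexHull ℝ (F.extremePoints ℝ \ {0})).extremePoints ℝ = F.extremePoints ℝ \ {0} := by
  obtain ⟨hfin, hhull, hconv⟩ := polytope_facts hF.1
  have h0F : (0 : α → ℝ) ∈ F := h0.1
  set V := F.extremePoints ℝ \ {0} with hV
  have hVfin : V.Finite := hfin.subset sdiff_subset
  have hVF : convexHull ℝ V ⊆ F := by
    conv_rhs => rw [← hhull]
    exact convexHull_mono sdiff_subset
  have hins : insert 0 V = F.extremePoints ℝ := by
    rw [hV, Set.insert_sdiff_singleton, Set.insert_eq_of_mem h0]
  have hcard : (F.extremePoints ℝ).ncard = V.ncard + 1 := by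
    rw [← hins, Set.ncard_insert_of_notMem (by simp [hV]) hVfin]
  have hdim : polyDim F = V.ncard := by
    have := hF.2
    rw [vertexCount, hcard] at this
    push_cast at this
    linarith
  have hspan : Submodule.span ℝ F = Submodule.span ℝ V := by
    rw [hV, Submodule.span_sdiff_singleton_zero, ← vectorSpan_eq_span_of_zero_mem h0F,
      ← vectorSpan_eq_span_of_zero_mem h0]
    conv_lhs => rw [← hhull]
    rw [vectorSpan_hull]
  have : Fintype V := hVfin.fintype
  have hcV : Fintype.card V = V.ncard := by rw [← Nat.card_eq_fintype_card]; rfl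
  have hli : LinearIndependent ℝ (Subtype.val : V → (α → ℝ)) := by
    rw [linearIndependent_iff_card_eq_finrank_span, Subtype.range_coe, hcV]
    rw [polyDim_of_zero_mem h0F, hspan] at hdim
    exact_mod_cast hdim.symm
  obtain ⟨f, hf⟩ : ∃ f : (α → ℝ) →ₗ[ℝ] ℝ, ∀ v ∈ V, f v = 1 := by
    obtain ⟨g, hg⟩ := LinearMap.exists_extend ((Module.Basis.span hli).constr ℝ (fun _ => (1 : ℝ)))
    refine ⟨g, fun v hv => ?_⟩
    have h1 := (Module.Basis.span hli).constr_basis ℝ (fun _ => (1 : ℝ)) ⟨v, hv⟩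
    rw [← hg] at h1
    simpa [Module.Basis.span_apply] using h1
  have hf1 : ∀ x ∈ convexHull ℝ V, f x = 1 := by
    intro x hx
    have : convexHull ℝ V ⊆ f ⁻¹' {1} :=
      convexHull_min (fun v hv => hf v hv) ((convex_singleton (1 : ℝ)).linear_preimage f)
    exact this hx
  have hdec : ∀ x ∈ F, f x ≤ 1 ∧ (f x = 1 → x ∈ convexHull ℝ V) := by
    intro x hx
    rcases V.eq_empty_or_nonempty with hE | hne
    · rw [← hhull, ← hins, hE] at hx
      simp at hx
      simp [hx]
    · rw [← hhull, ← hins, convexHull_insert hne, mem_convexJoin] at hx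
      obtain ⟨a, ha, b, hb, s, t, hs, ht, hst, rfl⟩ := hx
      rw [Set.mem_singleton_iff] at ha
      subst ha
      have : f (s • (0 : α → ℝ) + t • b) = t := by simp [hf1 b hb]
      rw [this]
      refine ⟨by linarith, fun h => ?_⟩
      subst h
      simpa using hb
  have hext : (convexHull ℝ V).extremePoints ℝ = V := by
    apply Subset.antisymm extremePoints_convexHull_subset
    intro v hv
    exact inter_extremePoints_subset_extremePoints_of_subset hVF
      ⟨subset_convexHull ℝ _ hv, hv.1⟩
  have hdim' : polyDim (convexHull ℝ V) = V.ncard - 1 := by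
    rcases V.eq_empty_or_nonempty with hE | hne
    · simp [hE, polyDim]
    · rw [polyDim, if_neg (by simpa using hne.ne_empty), vectorSpan_hull]
      have hpos : 0 < V.ncard := (Set.ncard_pos hVfin).2 hne
      have := (hli.affineIndependent ℝ).finrank_vectorSpan (n := V.ncard - 1) (by rw [hcV]; omega)
      rw [Subtype.range_coe] at this
      rw [this]; omega
  refine ⟨⟨hVF, ?_⟩, ⟨⟨hVfin.toFinset, by simp⟩, ?_⟩, ?_, ?_, hext⟩
  · rintro x hx y hy z hz ⟨a, b, ha, hb, hab, rfl⟩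
    have h1 := hf1 _ hz
    simp only [map_add, map_smul, smul_eq_mul] at h1
    refine (hdec x hx).2 ?_
    have hx1 := (hdec x hx).1
    have hy1 := (hdec y hy).1
    nlinarith
  · rw [vertexCount, hext, hdim']; ring
  · rw [hdim', hdim]
  · intro h
    have := hf1 _ h
    simp at this

theorem zero_one_extreme {α : Type*} {F : Set (α → ℝ)}
    (hF : ∀ x ∈ F, ∀ p, 0 ≤ x p ∧ x p ≤ 1) {x : α → ℝ} (hx : x ∈ F)
    (h01 : ∀ p, x p = 0 ∨ x p = 1) : x ∈ F.extremePoints ℝ := by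
  refine ⟨hx, ?_⟩
  rintro y hy z hz ⟨a, b, ha, hb, hab, rfl⟩
  funext p
  have hy' := hF y hy p
  have hz' := hF z hz p
  have := h01 p
  simp only [Pi.add_apply, Pi.smul_apply, smul_eq_mul] at this ⊢
  rcases this with h | h
  · rw [h]; nlinarith [mul_nonneg ha.le hy'.1, mul_nonneg hb.le hz'.1]
  · rw [h]; nlinarith [mul_nonneg ha.le (sub_nonneg.2 hy'.2), mul_nonneg hb.le (sub_nonneg.2 hz'.2)]

theorem order_extreme_zero_one {α : Type*} [PartialOrder α] {x : α → ℝ}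
    (hx : x ∈ (orderPolytope α).extremePoints ℝ) (p : α) : x p = 0 ∨ x p = 1 := by
  obtain ⟨⟨hb, hm⟩, he⟩ := hx
  have hy : (fun q => min (2 * x q) 1) ∈ orderPolytope α := by
    refine ⟨fun q => ⟨le_min (by linarith [(hb q).1]) zero_le_one, min_le_right _ _⟩, ?_⟩
    intro q r hqr
    exact min_le_min (by linarith [hm q r hqr]) le_rfl
  have hz : (fun q => max (2 * x q - 1) 0) ∈ orderPolytope α := by
    refine ⟨fun q => ⟨le_max_right _ _, max_le (by linarith [(hb q).2]) zero_le_one⟩, ?_⟩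
    intro q r hqr
    exact max_le_max (by linarith [hm q r hqr]) le_rfl
  have := he hy hz ⟨1/2, 1/2, by norm_num, by norm_num, by norm_num, by
    funext q
    simp only [Pi.add_apply, Pi.smul_apply, smul_eq_mul]
    rcases le_total (2 * x q) 1 with h | h
    · rw [min_eq_left h, max_eq_right (by linarith)]; ring
    · rw [min_eq_right h, max_eq_left (by linarith)]; ring⟩
  have h2 := congrFun this p
  rcases min_choice (2 * x p) 1 with h | h
  · left; linarith
  · right; linarith

theorem order_ext_finite (α : Type*) [Fintype α] [PartialOrder α] :
    ((orderPolytope α).extremePoints ℝ).Finite := by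
  refine (Set.Finite.pi (t := fun _ : α => ({0, 1} : Set ℝ)) fun _ => by simp).subset ?_
  intro x hx p _
  simpa using order_extreme_zero_one hx p

theorem order_faces_finite (α : Type*) [Fintype α] [PartialOrder α] :
    {F : Set (α → ℝ) | IsFaceOf F (orderPolytope α) ∧ IsSimplex F}.Finite := by
  refine Set.Finite.of_finite_image (f := fun F => F.extremePoints ℝ)
    ((order_ext_finite α).finite_subsets.subset ?_) ?_
  · rintro _ ⟨F, hF, rfl⟩
    exact hF.1.extremePoints_subset_extremePoints
  · intro F hF G hG h
    simp only at h
    rw [← (polytope_facts hF.2.1).2.1, ← (polytope_facts hG.2.1).2.1, h]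

theorem zero_mem_order (α : Type*) [PartialOrder α] : (0 : α → ℝ) ∈ orderPolytope α :=
  ⟨fun _ => by simp, fun _ _ _ => by simp⟩

theorem order_s0_le_s1 (α : Type*) [Fintype α] [PartialOrder α] (j : ℤ) :
    simpCount0 (orderPolytope α) j ≤ simpCount1 (orderPolytope α) (j - 1) := by
  have key : ∀ F, IsFaceOf F (orderPolytope α) → (0 : α → ℝ) ∈ F →
      (0 : α → ℝ) ∈ F.extremePoints ℝ := by
    intro F hF h0
    exact zero_one_extreme (fun x hx => (hF.1 hx).1) h0 (fun _ => Or.inl rfl)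
  refine Set.ncard_le_ncard_of_injOn (fun F => convexHull ℝ (F.extremePoints ℝ \ {0})) ?_ ?_
    ((order_faces_finite α).subset fun F hF => ⟨hF.1, hF.2.1⟩)
  · rintro F ⟨hF, hs, hd, h0⟩
    obtain ⟨h1, h2, h3, h4, -⟩ := facet_facts hs (key F hF h0)
    exact ⟨hF.trans h1, h2, by rw [h3, hd], h4⟩
  · rintro F ⟨hF, hs, hd, h0⟩ G ⟨hG, hs', hd', h0'⟩ h
    simp only at h
    obtain ⟨-, -, -, -, h5⟩ := facet_facts hs (key F hF h0)
    obtain ⟨-, -, -, -, h5'⟩ := facet_facts hs' (key G hG h0')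
    rw [h, h5'] at h5
    have : F.extremePoints ℝ = G.extremePoints ℝ := by
      rw [← Set.insert_eq_of_mem (key F hF h0), ← Set.insert_eq_of_mem (key G hG h0'),
        ← Set.insert_sdiff_singleton, ← h5, Set.insert_sdiff_singleton]
    rw [← (polytope_facts hs.1).2.1, ← (polytope_facts hs'.1).2.1, this]

/-- The face of the order polytope attached to a chain. -/
def chainFace {α : Type*} [PartialOrder α] (S : Finset α) : Set (α → ℝ) :=
  {x | x ∈ orderPolytope α ∧ (∀ q, (∀ p ∈ S, ¬ p ≤ q) → x q = 0) ∧
    ∀ q, ∀ p ∈ S, p ≤ q → (∀ r ∈ S, r ≤ q → r ≤ p) → x q = x p}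

theorem chainFace_extreme {α : Type*} [PartialOrder α] (S : Finset α) :
    IsExtreme ℝ (orderPolytope α) (chainFace S) := by
  refine ⟨fun x hx => hx.1, ?_⟩
  rintro x hx y hy z ⟨-, hz1, hz2⟩ ⟨a, b, ha, hb, hab, rfl⟩
  refine ⟨hx, ?_, ?_⟩
  · intro q hq
    have := hz1 q hq
    simp only [Pi.add_apply, Pi.smul_apply, smul_eq_mul] at this
    nlinarith [mul_nonneg ha.le (hx.1 q).1, mul_nonneg hb.le (hy.1 q).1]
  · intro q p hp hpq hmax
    have := hz2 q p hp hpq hmax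
    simp only [Pi.add_apply, Pi.smul_apply, smul_eq_mul] at this
    have h1 := hx.2 p q hpq
    have h2 := hy.2 p q hpq
    nlinarith [mul_nonneg ha.le (sub_nonneg.2 h1), mul_nonneg hb.le (sub_nonneg.2 h2)]

theorem order_convex (α : Type*) [PartialOrder α] : Convex ℝ (orderPolytope α) := by
  rintro x hx y hy a b ha hb hab
  refine ⟨fun p => ?_, fun p q hpq => ?_⟩
  · have h1 := hx.1 p
    have h2 := hy.1 p
    simp only [Pi.add_apply, Pi.smul_apply, smul_eq_mul]
    constructor
    · nlinarith [mul_nonneg ha h1.1, mul_nonneg hb h2.1]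
    · nlinarith [mul_nonneg ha (sub_nonneg.2 h1.2), mul_nonneg hb (sub_nonneg.2 h2.2)]
  · simp only [Pi.add_apply, Pi.smul_apply, smul_eq_mul]
    have h1 := hx.2 p q hpq
    have h2 := hy.2 p q hpq
    nlinarith [mul_nonneg ha (sub_nonneg.2 h1), mul_nonneg hb (sub_nonneg.2 h2)]

theorem chainFace_convex {α : Type*} [PartialOrder α] (S : Finset α) :
    Convex ℝ (chainFace S) := by
  rintro x hx y hy a b ha hb hab
  refine ⟨order_convex α hx.1 hy.1 ha hb hab, fun q hq => ?_, fun q p hp hpq hmax => ?_⟩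
  · simp [hx.2.1 q hq, hy.2.1 q hq]
  · simp [hx.2.2 q p hp hpq hmax, hy.2.2 q p hp hpq hmax]

theorem chainFace_compact {α : Type*} [Fintype α] [PartialOrder α] (S : Finset α) :
    IsCompact (chainFace S) := by
  refine (isCompact_Icc (a := (0 : α → ℝ)) (b := 1)).of_isClosed_subset ?_
    fun x hx => ⟨fun p => (hx.1.1 p).1, fun p => (hx.1.1 p).2⟩
  simp only [chainFace, orderPolytope, Set.ofPred_and, Set.ofPred_forall]
  refine ((isClosed_iInter fun p => ?_).inter
    (isClosed_iInter fun p => isClosed_iInter fun q => isClosed_iInter fun _ => ?_)).inter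
    ((isClosed_iInter fun p => isClosed_iInter fun _ => ?_).inter
    (isClosed_iInter fun p => isClosed_iInter fun q => isClosed_iInter fun _ =>
      isClosed_iInter fun _ => isClosed_iInter fun _ => ?_))
  · exact (isClosed_le (by fun_prop) (by fun_prop)).inter (isClosed_le (by fun_prop) (by fun_prop))
  · exact isClosed_le (by fun_prop) (by fun_prop)
  · exact isClosed_eq (by fun_prop) (by fun_prop)
  · exact isClosed_eq (by fun_prop) (by fun_prop)

theorem chainFace_polytope {α : Type*} [Fintype α] [PartialOrder α] (S : Finset α) :
    IsPolytope (chainFace S) := by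
  have hfin : ((chainFace S).extremePoints ℝ).Finite :=
    (order_ext_finite α).subset (chainFace_extreme S).extremePoints_subset_extremePoints
  refine ⟨hfin.toFinset, ?_⟩
  have := closure_convexHull_extremePoints (chainFace_compact S) (chainFace_convex S)
  rw [(hfin.isClosed_convexHull ℝ).closure_eq] at this
  simp [this]

theorem zero_mem_chainFace {α : Type*} [PartialOrder α] (S : Finset α) :
    (0 : α → ℝ) ∈ chainFace S :=
  ⟨zero_mem_order α, fun _ _ => rfl, fun _ _ _ _ _ => rfl⟩

theorem chi_pos {α : Type*} [PartialOrder α] {p q : α} (h : p ≤ q) : chi (Set.Ici p) q = 1 :=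
  if_pos h

theorem chi_neg {α : Type*} [PartialOrder α] {p q : α} (h : ¬ p ≤ q) : chi (Set.Ici p) q = 0 :=
  if_neg h

theorem chi_mem_chainFace {α : Type*} [PartialOrder α] {S : Finset α} {p : α} (hp : p ∈ S) :
    chi (Set.Ici p) ∈ chainFace S := by
  refine ⟨⟨fun q => ?_, fun q r hqr => ?_⟩, fun q hq => ?_, fun q r hr hrq hmax => ?_⟩
  · simp only [chi]; split_ifs <;> simp
  · by_cases h : p ≤ q
    · rw [chi_pos h, chi_pos (h.trans hqr)]
    · rw [chi_neg h]; simp only [chi]; split_ifs <;> simp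
  · exact chi_neg (hq p hp)
  · by_cases h : p ≤ r
    · rw [chi_pos h, chi_pos (h.trans hrq)]
    · rw [chi_neg h, chi_neg fun h' => h (hmax p hp h')]

theorem chain_exists_max {α : Type*} [PartialOrder α] {S : Finset α}
    (hS : IsChain (· ≤ ·) (S : Set α)) (q : α) :
    (∀ p ∈ S, ¬ p ≤ q) ∨ ∃ p ∈ S, p ≤ q ∧ ∀ r ∈ S, r ≤ q → r ≤ p := by
  classical
  by_cases h : ∃ p ∈ S, p ≤ q
  · right
    obtain ⟨p0, hp0, hpq0⟩ := h
    obtain ⟨p, hp⟩ := (S.filter (· ≤ q)).exists_maximal ⟨p0, by simp [hp0, hpq0]⟩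
    have hp1 := Finset.mem_filter.1 hp.1
    refine ⟨p, hp1.1, hp1.2, fun r hr hrq => ?_⟩
    rcases hS.total hr hp1.1 with h | h
    · exact h
    · exact hp.2 (Finset.mem_filter.2 ⟨hr, hrq⟩) h
  · left
    push Not at h
    exact h

theorem chainFace_ext {α : Type*} [Fintype α] [PartialOrder α] {S : Finset α}
    (hS : IsChain (· ≤ ·) (S : Set α)) :
    (chainFace S).extremePoints ℝ = insert 0 ((fun p => chi (Set.Ici p)) '' (S : Set α)) := by
  classical
  apply Subset.antisymm
  · intro v hv
    have h01 := order_extreme_zero_one ((chainFace_extreme S).extremePoints_subset_extremePoints hv)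
    obtain ⟨⟨hvO, hv1, hv2⟩, -⟩ := hv
    by_cases h : ∃ p ∈ S, v p = 1
    · right
      obtain ⟨p0, hp0, hpq0⟩ := h
      obtain ⟨p, hp⟩ := (S.filter (v · = 1)).exists_minimal ⟨p0, by simp [hp0, hpq0]⟩
      have hp1 := Finset.mem_filter.1 hp.1
      refine ⟨p, hp1.1, ?_⟩
      funext q
      by_cases hpq : p ≤ q
      · simp only [chi_pos hpq]
        exact le_antisymm (hp1.2 ▸ hvO.2 p q hpq) (hvO.1 q).2
      · simp only [chi_neg hpq]
        rcases chain_exists_max hS q with h | ⟨r, hr, hrq, hmax⟩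
        · exact (hv1 q h).symm
        · rw [hv2 q r hr hrq hmax]
          rcases h01 r with h | h
          · exact h.symm
          · exfalso
            rcases hS.total hr hp1.1 with h' | h'
            · exact hpq ((hp.2 (Finset.mem_filter.2 ⟨hr, h⟩) h').trans hrq)
            · exact hpq (h'.trans hrq)
    · left
      push Not at h
      funext q
      rcases chain_exists_max hS q with h' | ⟨r, hr, hrq, hmax⟩
      · exact hv1 q h'
      · rw [hv2 q r hr hrq hmax]
        exact (h01 r).resolve_right (h r hr)
  · have hc : ∀ x ∈ chainFace S, ∀ p, 0 ≤ x p ∧ x p ≤ 1 := fun x hx => hx.1.1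
    rintro v (rfl | ⟨p, hp, rfl⟩)
    · exact zero_one_extreme hc (zero_mem_chainFace S) fun _ => Or.inl rfl
    · refine zero_one_extreme hc (chi_mem_chainFace hp) fun q => ?_
      simp only [chi]; split_ifs <;> simp

theorem chi_Ici_li (α : Type*) [Fintype α] [PartialOrder α] :
    LinearIndependent ℝ (fun p : α => chi (Set.Ici p)) := by
  classical
  rw [Fintype.linearIndependent_iff]
  intro c hc p
  induction p using WellFoundedLT.induction with
  | ind p ih =>
    have := congrFun hc p
    rw [Finset.sum_apply, Finset.sum_eq_single p] at this
    · simpa [chi] using this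
    · intro q _ hq
      by_cases h : q ≤ p
      · simp [ih q (lt_of_le_of_ne h hq)]
      · simp [chi, h]
    · simp

theorem chainFace_simplex {α : Type*} [Fintype α] [PartialOrder α] {S : Finset α}
    (hS : IsChain (· ≤ ·) (S : Set α)) :
    polyDim (chainFace S) = S.card ∧ IsSimplex (chainFace S) := by
  classical
  have hli := chi_Ici_li α
  have hdim : polyDim (chainFace S) = S.card := by
    rw [polyDim_of_zero_mem (zero_mem_chainFace S)]
    have h1 : Submodule.span ℝ (chainFace S) =
        Submodule.span ℝ (Set.range (fun p : S => chi (Set.Ici (p : α)))) := by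
      rw [← vectorSpan_eq_span_of_zero_mem (zero_mem_chainFace S),
        ← (polytope_facts (chainFace_polytope S)).2.1, vectorSpan_hull, chainFace_ext hS,
        vectorSpan_eq_span_of_zero_mem (Set.mem_insert _ _), Submodule.span_insert_zero]
      congr 1
      ext v
      simp
    have h2 := finrank_span_eq_card (hli.comp (Subtype.val : S → α) Subtype.val_injective)
    rw [h1]
    rw [Fintype.card_coe] at h2
    exact congrArg Nat.cast h2
  refine ⟨hdim, chainFace_polytope S, ?_⟩
  rw [hdim, vertexCount, chainFace_ext hS, Set.ncard_insert_of_notMem _ (Set.toFinite _),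
    Set.ncard_image_of_injective _ hli.injective, Set.ncard_coe_finset]
  · simp
  · rintro ⟨p, -, hp⟩
    exact hli.ne_zero p hp

theorem chainFace_inj {α : Type*} [Fintype α] [PartialOrder α] {S T : Finset α}
    (hS : IsChain (· ≤ ·) (S : Set α)) (hT : IsChain (· ≤ ·) (T : Set α))
    (h : chainFace S = chainFace T) : S = T := by
  have hli := chi_Ici_li α
  have he := chainFace_ext hS
  rw [h, chainFace_ext hT] at he
  have hn : ∀ U : Finset α, (0 : α → ℝ) ∉ (fun p => chi (Set.Ici p)) '' (U : Set α) := by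
    rintro U ⟨p, -, hp⟩
    exact hli.ne_zero p hp
  have h2 : (fun p => chi (Set.Ici p)) '' (T : Set α) = (fun p => chi (Set.Ici p)) '' (S : Set α) := by
    rw [← Set.insert_sdiff_self_of_notMem (hn T), ← Set.insert_sdiff_self_of_notMem (hn S), he]
  exact_mod_cast (hli.injective.image_injective h2).symm

/-! Origin faces of the chain polytope. -/

theorem zero_mem_chainP (α : Type*) [PartialOrder α] : (0 : α → ℝ) ∈ chainPolytope α :=
  ⟨fun _ => by simp, fun _ _ => by simp⟩

theorem chainP_down {α : Type*} [PartialOrder α] {x y : α → ℝ} (hx : x ∈ chainPolytope α)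
    (h0 : ∀ p, 0 ≤ y p) (hy : ∀ p, y p ≤ x p) : y ∈ chainPolytope α :=
  ⟨h0, fun s hs => (Finset.sum_le_sum fun p _ => hy p).trans (hx.2 s hs)⟩

theorem chainP_le_one {α : Type*} [PartialOrder α] {x : α → ℝ} (hx : x ∈ chainPolytope α) (p : α) :
    x p ≤ 1 := by
  simpa using hx.2 {p} (by simp)

theorem chainP_antichain {α : Type*} [PartialOrder α] {x : α → ℝ} (h01 : ∀ p, x p = 0 ∨ x p = 1)
    (h : ∀ p q, x p = 1 → x q = 1 → p ≤ q → p = q) : x ∈ chainPolytope α := by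
  classical
  have h0 : ∀ p, 0 ≤ x p := fun p => by rcases h01 p with h | h <;> simp [h]
  refine ⟨h0, fun s hs => ?_⟩
  by_cases hp : ∃ p ∈ s, x p = 1
  · obtain ⟨p, hp, hp1⟩ := hp
    rw [Finset.sum_eq_single_of_mem p hp, hp1]
    intro q hq hqp
    refine (h01 q).resolve_right fun hq1 => hqp ?_
    rcases hs.total hq hp with h' | h'
    · exact h q p hq1 hp1 h'
    · exact (h p q hp1 hq1 h').symm
  · push Not at hp
    rw [Finset.sum_eq_zero fun p hps => (h01 p).resolve_right (hp p hps)]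
    exact zero_le_one

theorem face_scale {α : Type*} {P F : Set (α → ℝ)} (hF : IsExtreme ℝ P F)
    (h0 : (0 : α → ℝ) ∈ F) {x : α → ℝ} (hx : x ∈ P) {t : ℝ} (ht : 0 < t) (ht1 : t ≤ 1)
    (htx : t • x ∈ F) : x ∈ F := by
  rcases ht1.eq_or_lt with rfl | h
  · simpa using htx
  · exact hF.2 hx (hF.1 h0) htx ⟨t, 1 - t, ht, by linarith, by ring, by simp⟩

theorem chainP_face_mem {α : Type*} [Fintype α] [DecidableEq α] [PartialOrder α]
    {F : Set (α → ℝ)} (hF : IsExtreme ℝ (chainPolytope α) F) (hc : Convex ℝ F)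
    (h0 : (0 : α → ℝ) ∈ F) (x : α → ℝ) :
    x ∈ F ↔ x ∈ chainPolytope α ∧ ∀ p, x p ≠ 0 → Pi.single p (1 : ℝ) ∈ F := by
  constructor
  · intro hx
    have hxC := hF.1 hx
    refine ⟨hxC, fun p hp => ?_⟩
    have hpos : 0 < x p := lt_of_le_of_ne (hxC.1 p) (Ne.symm hp)
    have hs : Pi.single p (x p) ∈ chainPolytope α := by
      refine chainP_down hxC (fun q => ?_) (fun q => ?_)
      · by_cases h : q = p
        · subst h; simp [hpos.le]
        · simp [h]
      · by_cases h : q = p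
        · subst h; simp
        · simp [h, hxC.1 q]
    have hd : x - Pi.single p (x p) ∈ chainPolytope α := by
      refine chainP_down hxC (fun q => ?_) (fun q => ?_)
      · by_cases h : q = p
        · subst h; simp
        · simp [h, hxC.1 q]
      · by_cases h : q = p
        · subst h; simp [hpos.le]
        · simp [h]
    have hhalf : (1/2 : ℝ) • x ∈ F := by
      have := hc hx h0 (a := 1/2) (b := 1/2) (by norm_num) (by norm_num) (by norm_num)
      simpa using this
    have hsF : Pi.single p (x p) ∈ F :=
      hF.2 hs hd hhalf ⟨1/2, 1/2, by norm_num, by norm_num, by norm_num, by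
        rw [← smul_add]; simp⟩
    have he : Pi.single p (1 : ℝ) ∈ chainPolytope α := by
      refine chainP_antichain (fun q => ?_) (fun q r hq hr _ => ?_)
      · by_cases h : q = p
        · subst h; simp
        · simp [h]
      · have h1 : q = p := by by_contra h; simp [h] at hq
        have h2 : r = p := by by_contra h; simp [h] at hr
        rw [h1, h2]
    refine face_scale hF h0 he hpos (chainP_le_one hxC p) ?_
    rw [← Pi.single_smul]; simpa using hsF
  · rintro ⟨hxC, hx⟩
    rcases isEmpty_or_nonempty α with hE | hne
    · rwa [Subsingleton.elim x 0]
    have hn : (1 : ℝ) ≤ Fintype.card α := by exact_mod_cast Fintype.card_pos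
    have hn0 : (0 : ℝ) < Fintype.card α := by linarith
    refine face_scale hF h0 hxC (t := 1 / Fintype.card α) (by positivity)
      (by rw [div_le_one hn0]; exact hn) ?_
    have hm : ∀ p, Pi.single p (x p) ∈ F := by
      intro p
      by_cases h : x p = 0
      · simpa [h] using h0
      · have := hc (hx p h) h0 (hxC.1 p) (sub_nonneg.2 (chainP_le_one hxC p)) (by ring)
        rw [← Pi.single_smul] at this
        simpa using this
    have := hc.sum_mem (t := Finset.univ) (w := fun _ : α => (1 / Fintype.card α : ℝ))
      (z := fun p => Pi.single p (x p)) (fun _ _ => by positivity)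
      (by simp [hn0.ne']) (fun p _ => hm p)
    rwa [← Finset.smul_sum, Finset.univ_sum_single] at this

open Classical in
/-- The elements whose unit vector lies in the face. -/
noncomputable def faceSupp {α : Type*} [Fintype α] (F : Set (α → ℝ)) : Finset α :=
  Finset.univ.filter fun p => Pi.single p (1 : ℝ) ∈ F

open Classical in
theorem mem_faceSupp {α : Type*} [Fintype α] (F : Set (α → ℝ)) (p : α) :
    p ∈ faceSupp F ↔ Pi.single p (1 : ℝ) ∈ F := by simp [faceSupp]

theorem faceSupp_facts {α : Type*} [Fintype α] [PartialOrder α]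
    {F : Set (α → ℝ)} (hF : IsExtreme ℝ (chainPolytope α) F) (hs : IsSimplex F)
    (h0 : (0 : α → ℝ) ∈ F) :
    IsChain (· ≤ ·) (faceSupp F : Set α) ∧ polyDim F = (faceSupp F).card := by
  classical
  obtain ⟨hfin, -, hc⟩ := polytope_facts hs.1
  have hmem := chainP_face_mem hF hc h0
  have hms : ∀ p, p ∈ faceSupp F ↔ Pi.single p (1 : ℝ) ∈ F := fun p => by
    rw [mem_faceSupp]
  have hli := Pi.linearIndependent_single_one α ℝ
  have hdim : polyDim F = (faceSupp F).card := by
    rw [polyDim_of_zero_mem h0]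
    have h1 : Submodule.span ℝ F =
        Submodule.span ℝ (Set.range (fun p : faceSupp F => (Pi.single (p : α) (1 : ℝ) : α → ℝ))) := by
      apply le_antisymm
      · rw [Submodule.span_le]
        intro x hx
        rw [← Finset.univ_sum_single x]
        refine Submodule.sum_mem _ fun p _ => ?_
        by_cases h : x p = 0
        · simp [h]
        · have := Submodule.smul_mem _ (x p) (Submodule.subset_span (R := ℝ)
            (s := Set.range (fun p : faceSupp F => (Pi.single (p : α) (1 : ℝ) : α → ℝ)))
            ⟨⟨p, (hms p).2 (((hmem x).1 hx).2 p h)⟩, rfl⟩)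
          simp only [← Pi.single_smul, smul_eq_mul, mul_one] at this
          exact this
      · rw [Submodule.span_le]
        rintro _ ⟨p, rfl⟩
        exact Submodule.subset_span ((hms p).1 p.2)
    have h2 := finrank_span_eq_card (hli.comp (Subtype.val : faceSupp F → α) Subtype.val_injective)
    rw [h1]
    rw [Fintype.card_coe] at h2
    exact congrArg Nat.cast h2
  refine ⟨?_, hdim⟩
  have hcube : ∀ x ∈ F, ∀ p, 0 ≤ x p ∧ x p ≤ 1 := fun x hx p =>
    ⟨(hF.1 hx).1 p, chainP_le_one (hF.1 hx) p⟩
  intro p hp q hq hpq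
  by_contra hcomp
  push Not at hcomp
  simp only [Finset.mem_coe] at hp hq
  have hval : ∀ r, (Pi.single p (1 : ℝ) + Pi.single q (1 : ℝ) : α → ℝ) r =
      if r = p ∨ r = q then 1 else 0 := by
    intro r
    by_cases h1 : r = p
    · subst h1; simp [hpq]
    · by_cases h2 : r = q
      · subst h2; simp [h1]
      · simp [h1, h2]
  have h01 : ∀ r, (Pi.single p (1 : ℝ) + Pi.single q (1 : ℝ) : α → ℝ) r = 0 ∨
      (Pi.single p (1 : ℝ) + Pi.single q (1 : ℝ) : α → ℝ) r = 1 := by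
    intro r
    rw [hval]; split_ifs <;> simp
  have hone : ∀ r, (Pi.single p (1 : ℝ) + Pi.single q (1 : ℝ) : α → ℝ) r ≠ 0 →
      r = p ∨ r = q := by
    intro r hr
    rw [hval] at hr
    by_contra h
    simp [h] at hr
  have hpqF : (Pi.single p (1 : ℝ) + Pi.single q (1 : ℝ) : α → ℝ) ∈ F := by
    rw [hmem]
    refine ⟨chainP_antichain h01 ?_, ?_⟩
    · intro r s hr hs hrs
      rcases hone r (by rw [hr]; simp) with rfl | rfl <;>
        rcases hone s (by rw [hs]; simp) with rfl | rfl
      · rfl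
      · exact absurd hrs hcomp.1
      · exact absurd hrs hcomp.2
      · rfl
    · intro r hr
      rcases hone r hr with rfl | rfl
      · exact (hms _).1 hp
      · exact (hms _).1 hq
  have hsub : insert (Pi.single p (1 : ℝ) + Pi.single q (1 : ℝ) : α → ℝ)
      (insert 0 ((fun r => Pi.single r (1 : ℝ)) '' (faceSupp F : Set α))) ⊆ F.extremePoints ℝ := by
    rintro v (rfl | rfl | ⟨r, hr, rfl⟩)
    · exact zero_one_extreme hcube hpqF h01
    · exact zero_one_extreme hcube h0 fun _ => Or.inl rfl
    · refine zero_one_extreme hcube ((hms r).1 hr) fun s => ?_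
      by_cases h : s = r
      · subst h; simp
      · simp [h]
  have hle := Set.ncard_le_ncard hsub hfin
  rw [Set.ncard_insert_of_notMem _ (Set.toFinite _), Set.ncard_insert_of_notMem _ (Set.toFinite _),
    Set.ncard_image_of_injective _ hli.injective, Set.ncard_coe_finset] at hle
  · have := hs.2
    rw [hdim, vertexCount] at this
    omega
  · rintro ⟨r, -, hr⟩
    exact hli.ne_zero r hr
  · rintro (h | ⟨r, -, hr⟩)
    · have := congrFun h p
      rw [hval] at this
      simp at this
    · have h1 := congrFun hr p
      have h2 := congrFun hr q
      rw [hval] at h1 h2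
      have e1 : p = r := by by_contra h; simp [h] at h1
      have e2 : q = r := by by_contra h; simp [h] at h2
      exact hpq (e1.trans e2.symm)

theorem chain_s0_le_order_s0 (α : Type*) [Fintype α] [PartialOrder α] (j : ℤ) :
    simpCount0 (chainPolytope α) j ≤ simpCount0 (orderPolytope α) j := by
  classical
  refine Set.ncard_le_ncard_of_injOn (fun F => chainFace (faceSupp F)) ?_ ?_
    ((order_faces_finite α).subset fun F hF => ⟨hF.1, hF.2.1⟩)
  · rintro F ⟨hF, hs, hd, h0⟩
    obtain ⟨h1, h2⟩ := faceSupp_facts hF hs h0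
    obtain ⟨h3, h4⟩ := chainFace_simplex h1
    exact ⟨chainFace_extreme _, h4, by rw [h3, ← h2, hd], zero_mem_chainFace _⟩
  · rintro F ⟨hF, hs, hd, h0⟩ G ⟨hG, hs', hd', h0'⟩ h
    have hFG := chainFace_inj (faceSupp_facts hF hs h0).1 (faceSupp_facts hG hs' h0').1 h
    have hms : ∀ p, Pi.single p (1 : ℝ) ∈ F ↔ Pi.single p (1 : ℝ) ∈ G := by
      intro p
      have h1 := mem_faceSupp F p
      have h2 := mem_faceSupp G p
      rw [hFG] at h1
      have h3 := h1.symm.trans h2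
      convert h3
    ext x
    rw [chainP_face_mem hF (polytope_facts hs.1).2.2 h0,
      chainP_face_mem hG (polytope_facts hs'.1).2.2 h0']
    simp only [hms]

theorem count_split {α : Type*} (P : Set (α → ℝ)) (k : ℤ)
    (hfin : {F : Set (α → ℝ) | IsFaceOf F P ∧ IsSimplex F ∧ polyDim F = k}.Finite) :
    simpCount P k = simpCount0 P k + simpCount1 P k := by
  unfold simpCount simpCount0 simpCount1
  rw [← Set.ncard_union_eq _ (hfin.subset fun F hF => ⟨hF.1, hF.2.1, hF.2.2.1⟩)
    (hfin.subset fun F hF => ⟨hF.1, hF.2.1, hF.2.2.1⟩)]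
  · congr 1
    ext F
    simp only [Set.mem_ofPred_eq, Set.mem_union]
    tauto
  · rw [Set.disjoint_left]
    rintro F ⟨_, _, _, h⟩ ⟨_, _, _, h'⟩
    exact h' h

theorem order_chain_count (α : Type*) [Fintype α] [PartialOrder α] (k : ℤ)
    (h : simpCount (orderPolytope α) k ≤ simpCount (chainPolytope α) k) :
    simpCount0 (orderPolytope α) k + simpCount1 (orderPolytope α) k ≤
      simpCount0 (chainPolytope α) k + simpCount1 (chainPolytope α) k := by
  rw [← count_split (orderPolytope α) k
    ((order_faces_finite α).subset fun F hF => ⟨hF.1, hF.2.1⟩)]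
  by_cases hfin : {F : Set (α → ℝ) | IsFaceOf F (chainPolytope α) ∧ IsSimplex F ∧
      polyDim F = k}.Finite
  · rwa [← count_split _ k hfin]
  · have : simpCount (chainPolytope α) k = 0 := Set.Infinite.ncard hfin
    omega

/-- the coefficient-wise inequalities `0 ≤ α ≤ β ≤ γ ≤ δ` and
`0 ≤ x(β − α) ≤ δ − γ` for the polynomials `α = (1/x)S⁰_{C(P)}`, `β = (1/x)S⁰_{O(P)}`,
`γ = S¹_{O(P)}`, `δ = S¹_{C(P)}`: the coefficient of `x^j` in `α` (resp. `β`) is the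
number of `j`-dimensional origin-containing simplex faces, and in `γ` (resp. `δ`) it is
the number of `(j-1)`-dimensional simplex faces avoiding the origin. -/
theorem abcd_inequalities (α : Type*) [Fintype α] [PartialOrder α]
    (h : ∀ k : ℤ, simpCount (orderPolytope α) k ≤ simpCount (chainPolytope α) k) :
    (∀ j : ℤ,
      simpCount0 (chainPolytope α) j ≤ simpCount0 (orderPolytope α) j ∧
      simpCount0 (orderPolytope α) j ≤ simpCount1 (orderPolytope α) (j - 1) ∧
      simpCount1 (orderPolytope α) (j - 1) ≤ simpCount1 (chainPolytope α) (j - 1)) ∧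
    (∀ j : ℤ,
      0 ≤ (simpCount0 (orderPolytope α) j : ℤ) - simpCount0 (chainPolytope α) j ∧
      (simpCount0 (orderPolytope α) j : ℤ) - simpCount0 (chainPolytope α) j
        ≤ (simpCount1 (chainPolytope α) j : ℤ) - simpCount1 (orderPolytope α) j) := by
  have hA := chain_s0_le_order_s0 α
  have hB := order_s0_le_s1 α
  have hC := fun k => order_chain_count α k (h k)
  refine ⟨fun j => ⟨hA j, hB j, ?_⟩, fun j => ?_⟩
  · have h1 := hA (j - 1)
    have h2 := hC (j - 1)
    omega
  · have h1 := hA j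
    have h2 := hC j
    omega
end
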